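/- arXiv:2210.17371 — 2 statements merged into one kernel-verified Lean document; each statement's English description precedes it below -/
import Mathlib

section
/- Let T be a strongly τ₁kt-connected tournament on vertex set V. Then there exist vertex sets S⁺(α), S⁻(α) ⊆ S(α) ⊆ U(α) ⊆ V and X(α) ⊆ V, indexed by a set A₁ of size σ₁kt, and vertices s⁺(α), s⁻(α) ∈ S(α), satisfying: (G1) the sets U(α), α ∈ A₁, are pairwise disjoint; (G2) |S(α)| ≤ ρ and |X(α)| ≤ ρσ₁kt for every α ∈ A₁; (G3) for every α ∈ A₁, u ∈ S⁻(α) and v ∈ S⁺(α), there is a directed path in T[U(α)] from u to v; (G4) every in-neighbour of s⁺(α) lying outside X(α) is an in-neighbour of every vertex of U(α) ∖ S(α), and every out-neighbour of s⁻(α) lying outside X(α) is an out-neighbour of every vertex of U(α) ∖ S(α); (G5) setting V_okay := V ∖ ⋃_α S(α), V_bad⁺ := {u ∈ V_okay : u has no out-neighbour in S⁻(α) for at least kt indices α ∈ A₁} and V_bad⁻ := {u ∈ V_okay : u has no in-neighbour in S⁺(α) for at least kt indices α ∈ A₁}, every u ∈ V_okay has out-degree at least 10^12·|V_bad⁺|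 and in-degree at least 10^12·|V_bad⁻|. -/
open Finset

namespace TournamentPartition

/-! ### Basic constants from the paper -/

def rho : ℕ := 10 ^ 4
def sigma1 : ℕ := 10 ^ 60
def sigma2 : ℕ := 10 ^ 4
def sigma3 : ℕ := 10

/-- `s` contains at least `m` elements satisfying `P`. -/
def ManyIn {α : Type*} (s : Finset α) (m : ℝ) (P : α → Prop) : Prop :=
  ∃ s' : Finset α, s' ⊆ s ∧ m ≤ (s'.card : ℝ) ∧ ∀ x ∈ s', P x

section Defs

variable {V I : Type*}

/-- `E u v` means that the edge between `u` and `v` is directed from `u` to `v`. -/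
def IsTournament (E : V → V → Prop) : Prop :=
  (∀ v, ¬ E v v) ∧ ∀ u v : V, u ≠ v → (E u v ↔ ¬ E v u)

/-- There is a directed path from `u` to `v` all of whose vertices lie in `S`. -/
def ReachWithin (E : V → V → Prop) (S : Set V) (u v : V) : Prop :=
  Relation.ReflTransGen (fun a b => a ∈ S ∧ b ∈ S ∧ E a b) u v

def StronglyConnectedOn (E : V → V → Prop) (S : Set V) : Prop :=
  ∀ u ∈ S, ∀ v ∈ S, ReachWithin E S u v

/-- A directed path, as a list of distinct vertices with consecutive edges. -/
def IsDiPath (E : V → V → Prop) (l : List V) : Prop :=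
  l ≠ [] ∧ l.Nodup ∧ l.Chain' E

variable [Fintype V] [DecidableEq V]

/-- The set `S` induces a strongly `k`-connected subtournament. -/
def StronglyKConnectedOn (E : V → V → Prop) (k : ℕ) (S : Finset V) : Prop :=
  k + 1 ≤ S.card ∧
    ∀ Z : Finset V, Z.card ≤ k → StronglyConnectedOn E ((S \ Z : Finset V) : Set V)

def StronglyKConnected (E : V → V → Prop) (k : ℕ) : Prop :=
  StronglyKConnectedOn E k Finset.univ

def outN (E : V → V → Prop) [DecidableRel E] (u : V) : Finset V :=
  Finset.univ.filter fun v => E u v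

def inN (E : V → V → Prop) [DecidableRel E] (u : V) : Finset V :=
  Finset.univ.filter fun v => E v u

/-- A system of gadgets `U(α)` with special sets `S⁺(α), S⁻(α) ⊆ S(α) ⊆ U(α)`,
exceptional sets `X(α)` and special vertices `s⁺(α), s⁻(α) ∈ S(α)`. -/
structure GadgetSystem (V I : Type*) where
  U : I → Finset V
  S : I → Finset V
  Sp : I → Finset V
  Sm : I → Finset V
  X : I → Finset V
  sp : I → V
  sm : I → V
  sp_mem : ∀ α, sp α ∈ S α
  sm_mem : ∀ α, sm α ∈ S α
  Sp_subset : ∀ α, Sp α ⊆ S α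
  Sm_subset : ∀ α, Sm α ⊆ S α
  S_subset : ∀ α, S α ⊆ U α

variable [Fintype I] [DecidableEq I]

def Vokay (G : GadgetSystem V I) : Finset V :=
  Finset.univ \ Finset.univ.biUnion G.S

/-- Vertices of `V_okay` having no out-neighbour in `S⁻(α)` for at least `k*t` indices `α`. -/
def VbadP (E : V → V → Prop) [DecidableRel E] (G : GadgetSystem V I) (k t : ℕ) : Finset V :=
  (Vokay G).filter fun u =>
    k * t ≤ (Finset.univ.filter fun α : I => ∀ v ∈ G.Sm α, ¬ E u v).card

/-- Vertices of `V_okay` having no in-neighbour in `S⁺(α)` for at least `k*t` indices `α`. -/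
def VbadM (E : V → V → Prop) [DecidableRel E] (G : GadgetSystem V I) (k t : ℕ) : Finset V :=
  (Vokay G).filter fun u =>
    k * t ≤ (Finset.univ.filter fun α : I => ∀ v ∈ G.Sp α, ¬ E v u).card

def Vbad (E : V → V → Prop) [DecidableRel E] (G : GadgetSystem V I) (k t : ℕ) : Finset V :=
  VbadP E G k t ∩ VbadM E G k t

def VgoodP (E : V → V → Prop) [DecidableRel E] (G : GadgetSystem V I) (k t : ℕ) : Finset V :=
  Vokay G \ VbadP E G k t

def VgoodM (E : V → V → Prop) [DecidableRel E] (G : GadgetSystem V I) (k t : ℕ) : Finset V :=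
  Vokay G \ VbadM E G k t

def Vgood (E : V → V → Prop) [DecidableRel E] (G : GadgetSystem V I) (k t : ℕ) : Finset V :=
  VgoodP E G k t ∩ VgoodM E G k t

/-- `W(C) = V ∖ ⋃_{α ∈ C} U(α)`. -/
def Wof (G : GadgetSystem V I) (C : Finset I) : Finset V :=
  Finset.univ \ C.biUnion G.U

def NokayP (E : V → V → Prop) [DecidableRel E] (G : GadgetSystem V I) (u : V) : Finset V :=
  outN E u ∩ Vokay G

def NokayM (E : V → V → Prop) [DecidableRel E] (G : GadgetSystem V I) (u : V) : Finset V :=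
  inN E u ∩ Vokay G

def NgoodP (E : V → V → Prop) [DecidableRel E] (G : GadgetSystem V I) (k t : ℕ) (u : V) :
    Finset V :=
  outN E u ∩ VgoodP E G k t

def NgoodM (E : V → V → Prop) [DecidableRel E] (G : GadgetSystem V I) (k t : ℕ) (u : V) :
    Finset V :=
  inN E u ∩ Vgood E G k t

/-! ### Properties (G1)–(G9) -/

def CondG1 (G : GadgetSystem V I) : Prop :=
  ∀ α β : I, α ≠ β → Disjoint (G.U α) (G.U β)

def CondG2 (G : GadgetSystem V I) (k t : ℕ) : Prop :=
  ∀ α : I, (G.S α).card ≤ rho ∧ (G.X α).card ≤ rho * sigma1 * k * t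

def CondG3 (E : V → V → Prop) (G : GadgetSystem V I) : Prop :=
  ∀ α : I, ∀ u ∈ G.Sm α, ∀ v ∈ G.Sp α, ReachWithin E (G.U α : Set V) u v

def CondG4 (E : V → V → Prop) (G : GadgetSystem V I) : Prop :=
  ∀ α : I, ∀ x : V, x ∉ G.X α →
    (E x (G.sp α) → ∀ u ∈ G.U α \ G.S α, E x u) ∧
    (E (G.sm α) x → ∀ u ∈ G.U α \ G.S α, E u x)

def CondG5 (E : V → V → Prop) [DecidableRel E] (G : GadgetSystem V I) (k t : ℕ) : Prop :=
  ∀ u ∈ Vokay G,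
    10 ^ 12 * (VbadP E G k t).card ≤ (outN E u).card ∧
    10 ^ 12 * (VbadM E G k t).card ≤ (inN E u).card

/-- Properties (G1)–(G5) of a gadget system. -/
def GadgetHyp (E : V → V → Prop) [DecidableRel E] (G : GadgetSystem V I) (k t : ℕ) : Prop :=
  CondG1 G ∧ CondG2 G k t ∧ CondG3 E G ∧ CondG4 E G ∧ CondG5 E G k t

def CondG6 (E : V → V → Prop) [DecidableRel E] (G : GadgetSystem V I) (k t : ℕ) : Prop :=
  (Fintype.card V : ℝ) / 2 ≤ ((Vgood E G k t).card : ℝ)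

def CondG7 (E : V → V → Prop) [DecidableRel E] (G : GadgetSystem V I) (k t τ₁ : ℕ) : Prop :=
  ∀ u ∈ Vokay G,
    max ((10 : ℝ) ^ 11 * ((VbadP E G k t).card : ℝ)) (((τ₁ * k * t : ℕ) : ℝ) / 2)
      ≤ ((outN E u ∩ VgoodP E G k t).card : ℝ)

def CondG8 (E : V → V → Prop) [DecidableRel E] (G : GadgetSystem V I) (k t τ₁ : ℕ) : Prop :=
  ∀ u ∈ Vokay G,
    max ((10 : ℝ) ^ 11 * ((VbadM E G k t).card : ℝ)) (((τ₁ * k * t : ℕ) : ℝ) / 2)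
      ≤ ((inN E u ∩ Vgood E G k t).card : ℝ)

def CondG9 (E : V → V → Prop) [DecidableRel E] (G : GadgetSystem V I) (k t τ₁ : ℕ) : Prop :=
  ∀ u : V,
    max ((10 : ℝ) ^ 11 * (((Finset.univ \ Vokay G).card : ℕ) : ℝ)) (((τ₁ * k * t : ℕ) : ℝ) / 2)
      ≤ ((outN E u ∩ Vokay G).card : ℝ) ∧
    max ((10 : ℝ) ^ 11 * (((Finset.univ \ Vokay G).card : ℕ) : ℝ)) (((τ₁ * k * t : ℕ) : ℝ) / 2)
      ≤ ((inN E u ∩ Vokay G).card : ℝ)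

/-- Properties (G6)–(G9) of a gadget system. -/
def GadgetHyp2 (E : V → V → Prop) [DecidableRel E] (G : GadgetSystem V I) (k t τ₁ : ℕ) :
    Prop :=
  CondG6 E G k t ∧ CondG7 E G k t τ₁ ∧ CondG8 E G k t τ₁ ∧ CondG9 E G k t τ₁

/-! ### Available vertices -/

def AvailA1 (E : V → V → Prop) [DecidableRel E] (G : GadgetSystem V I) (k t : ℕ)
    (W : Finset V) (u : V) : Prop :=
  u ∈ Vgood E G k t ∩ W

def AvailA2 (E : V → V → Prop) [DecidableRel E] (G : GadgetSystem V I) (k t τ₂ : ℕ)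
    (W : Finset V) (u : V) : Prop :=
  u ∈ (VgoodP E G k t \ VgoodM E G k t) ∩ W ∧
    ManyIn (inN E u) ((τ₂ * k * t : ℕ) : ℝ) (AvailA1 E G k t W)

def AvailA3 (E : V → V → Prop) [DecidableRel E] (G : GadgetSystem V I) (k t τ₂ : ℕ)
    (W : Finset V) (u : V) : Prop :=
  u ∈ (VgoodM E G k t \ VgoodP E G k t) ∩ W ∧
    ManyIn (outN E u) ((τ₂ * k * t : ℕ) : ℝ)
      (fun v => AvailA1 E G k t W v ∨ AvailA2 E G k t τ₂ W v)

def AvailA4 (E : V → V → Prop) [DecidableRel E] (G : GadgetSystem V I) (k t τ₂ : ℕ)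
    (W : Finset V) (u : V) : Prop :=
  u ∈ Vbad E G k t ∩ W ∧
    ManyIn (outN E u) ((τ₂ * k * t : ℕ) : ℝ)
      (fun v => AvailA1 E G k t W v ∨ AvailA2 E G k t τ₂ W v) ∧
    ManyIn (inN E u) ((τ₂ * k * t : ℕ) : ℝ) (AvailA1 E G k t W)

/-- `u` is available (for `α`) with respect to a family `𝒜`, where `W = W(𝒜 ∖ {α})`. -/
def Available (E : V → V → Prop) [DecidableRel E] (G : GadgetSystem V I) (k t τ₂ : ℕ)
    (W : Finset V) (u : V) : Prop :=
  AvailA1 E G k t W u ∨ AvailA2 E G k t τ₂ W u ∨ AvailA3 E G k t τ₂ W u ∨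
    AvailA4 E G k t τ₂ W u

/-! ### Eligible and helpful vertices -/

/-- Indices `α ∈ 𝒜` such that `u` has no out-neighbour in `S⁻(α)`. -/
def MissOut (E : V → V → Prop) [DecidableRel E] (G : GadgetSystem V I) (𝒜 : Finset I)
    (u : V) : Finset I :=
  𝒜.filter fun α => ∀ v ∈ G.Sm α, ¬ E u v

/-- Indices `α ∈ 𝒜` such that `u` has no in-neighbour in `S⁺(α)`. -/
def MissIn (E : V → V → Prop) [DecidableRel E] (G : GadgetSystem V I) (𝒜 : Finset I)
    (u : V) : Finset I :=
  𝒜.filter fun α => ∀ v ∈ G.Sp α, ¬ E v u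

def Nice1 (E : V → V → Prop) [DecidableRel E] (G : GadgetSystem V I) (k t : ℕ)
    (𝒜 : Finset I) (W : Finset V) (u : V) : Prop :=
  u ∈ Vgood E G k t ∩ W ∧ (MissOut E G 𝒜 u).card ≤ k ∧ (MissIn E G 𝒜 u).card ≤ k

def Nice2 (E : V → V → Prop) [DecidableRel E] (G : GadgetSystem V I) (k t : ℕ) (m : ℝ)
    (𝒜 : Finset I) (W : Finset V) (u : V) : Prop :=
  u ∈ (VgoodP E G k t \ VgoodM E G k t) ∩ W ∧ (MissOut E G 𝒜 u).card ≤ k ∧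
    ManyIn (inN E u) m (Nice1 E G k t 𝒜 W)

def Nice3 (E : V → V → Prop) [DecidableRel E] (G : GadgetSystem V I) (k t : ℕ) (m : ℝ)
    (𝒜 : Finset I) (W : Finset V) (u : V) : Prop :=
  u ∈ (VgoodM E G k t \ VgoodP E G k t) ∩ W ∧ (MissIn E G 𝒜 u).card ≤ k ∧
    ManyIn (outN E u) m (fun v => Nice1 E G k t 𝒜 W v ∨ Nice2 E G k t m 𝒜 W v)

def Nice4 (E : V → V → Prop) [DecidableRel E] (G : GadgetSystem V I) (k t : ℕ) (m : ℝ)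
    (𝒜 : Finset I) (W : Finset V) (u : V) : Prop :=
  u ∈ Vbad E G k t ∩ W ∧
    ManyIn (inN E u) m (Nice1 E G k t 𝒜 W) ∧
    ManyIn (outN E u) m (fun v => Nice1 E G k t 𝒜 W v ∨ Nice2 E G k t m 𝒜 W v)

def NiceFor (E : V → V → Prop) [DecidableRel E] (G : GadgetSystem V I) (k t : ℕ) (m : ℝ)
    (𝒜 : Finset I) (W : Finset V) (u : V) : Prop :=
  Nice1 E G k t 𝒜 W u ∨ Nice2 E G k t m 𝒜 W u ∨ Nice3 E G k t m 𝒜 W u ∨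
    Nice4 E G k t m 𝒜 W u

/-- `u` is eligible for `𝒜` in `W`. -/
def Eligible (E : V → V → Prop) [DecidableRel E] (G : GadgetSystem V I) (k t τ₃ : ℕ)
    (𝒜 : Finset I) (W : Finset V) (u : V) : Prop :=
  NiceFor E G k t ((τ₃ * k * t : ℕ) : ℝ) 𝒜 W u

/-- `u` is helpful for `𝒜` in `W`. -/
def Helpful (E : V → V → Prop) [DecidableRel E] (G : GadgetSystem V I) (k t : ℕ)
    (𝒜 : Finset I) (W : Finset V) (u : V) : Prop :=
  NiceFor E G k t (k : ℝ) 𝒜 W u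

end Defs

noncomputable def phi0 (τ₁ : ℕ) : ℝ := (τ₁ : ℝ) / 4
noncomputable def phi1 (τ₁ : ℕ) : ℝ := phi0 τ₁ / (2 ^ 6 * (rho : ℝ))
noncomputable def phi2 (τ₁ : ℕ) : ℝ := phi1 τ₁ / (2 ^ 14 * (rho : ℝ) ^ 2)
noncomputable def phi3 (τ₁ : ℕ) : ℝ := phi2 τ₁ / (2 ^ 14 * (rho : ℝ) ^ 2)

/-!
In a tournament, repeatedly passing to a vertex of small in-degree yields a set of at most `c + 1`
vertices with a source, dominating all remaining vertices up to a `2⁻ᶜ`-fraction of every in-degree;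
likewise for out-degrees, with a sink. Choose disjoint sets of both kinds greedily, and let Menger's
theorem link the sinks of the latter to the sources of the former. The sets at the two ends of a
path, together with its first and last three vertices, form `S(α)`, and the path supplies the rest
of `U(α)`.

For (G4) the linkage is chosen of minimum total length. A vertex with an edge to the last vertex of
a path which does not dominate the middle of that path would be a detour; it then lies on another
path, and two such vertices on the same path would allow shortening the linkage. So there are few
detours and they fit into `X(α)`. For (G5), double counting transfers the fraction `2⁻ᶜ` from the
individual sets to the vertices which are bad for many indices.
-/

/-! ### Almost dominating sets -/

section Dominating

variable {V : Type*} {E : V → V → Prop}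

/-- `s` is a source of `A`: it belongs to `A` and has an edge to every other vertex of `A`.
A sink is a source with respect to `Function.swap E`. -/
def IsSource (E : V → V → Prop) (A : Finset V) (s : V) : Prop :=
  s ∈ A ∧ ∀ v ∈ A, v ≠ s → E s v

/-- The vertices of `O` having no in-neighbour in `A`; the vertices without out-neighbour in `A`
are obtained by passing to `Function.swap E`. -/
def undominated (E : V → V → Prop) [DecidableRel E] (A O : Finset V) : Finset V :=
  {x ∈ O | ∀ v ∈ A, ¬ E v x}

theorem undominated_subset_undominated [DecidableRel E] {A O O' : Finset V} (h : O' ⊆ O) :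
    undominated E A O' ⊆ undominated E A O :=
  filter_subset_filter _ h

theorem IsTournament.swap (hE : IsTournament E) : IsTournament (Function.swap E) :=
  ⟨hE.1, fun u v huv => hE.2 v u huv.symm⟩

theorem IsTournament.adj_of_not_adj (hE : IsTournament E) {u v : V} (huv : u ≠ v)
    (h : ¬ E u v) : E v u :=
  (hE.2 v u huv.symm).2 h

theorem IsTournament.not_adj_of_adj (hE : IsTournament E) {u v : V} (h : E u v) : ¬ E v u := by
  have huv : u ≠ v := by
    rintro rfl
    exact hE.1 u h
  exact (hE.2 u v huv).1 h

variable [DecidableRel E]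

theorem IsTournament.exists_two_mul_card_filter_adj_le (hE : IsTournament E) {M : Finset V}
    (hM : M.Nonempty) : ∃ v ∈ M, 2 * #{x ∈ M | E x v} ≤ #M := by
  have hsum : ∑ v ∈ M, #{x ∈ M | E x v} ≤ ∑ v ∈ M, #{x ∈ M | E v x} :=
    (sum_card_bipartiteAbove_eq_sum_card_bipartiteBelow E).ge
  obtain ⟨v, hv, hle⟩ := exists_le_of_sum_le hM hsum
  refine ⟨v, hv, ?_⟩
  have hout : #{x ∈ M | E v x} ≤ #{x ∈ M | ¬ E x v} :=
    card_le_card (monotone_filter_right M fun x _ hvx => hE.not_adj_of_adj hvx)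
  have hsplit := card_filter_add_card_filter_not (s := M) fun x => E x v
  omega

variable [DecidableEq V]

theorem undominated_insert_sdiff_insert_subset (hE : IsTournament E) (A R : Finset V) (v : V) :
    undominated E (insert v A) (R \ insert v A) ⊆ undominated E A ({x ∈ R | E x v} \ A) := by
  intro x hx
  simp only [undominated, mem_filter, mem_sdiff, mem_insert, not_or, forall_eq_or_imp] at hx ⊢
  obtain ⟨⟨hxR, hxv, hxA⟩, hvx, hAx⟩ := hx
  exact ⟨⟨⟨hxR, hE.adj_of_not_adj (Ne.symm hxv) hvx⟩, hxA⟩, hAx⟩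

/-- Repeatedly moving to a vertex of small in-degree halves the undominated part each time; the
last vertex chosen dominates all previous ones and `v₀`. -/
theorem IsTournament.exists_isSource_insert (hE : IsTournament E) (c : ℕ) {M : Finset V} {v₀ : V}
    (hM : ∀ x ∈ M, E x v₀) :
    ∃ A ⊆ M, #A ≤ c ∧ 2 ^ c * #(undominated E A (M \ A)) ≤ #M ∧
      ∃ s, IsSource E (insert v₀ A) s := by
  induction c generalizing M v₀ with
  | zero => exact ⟨∅, by simp, by simp, by simp [undominated], v₀, by simp [IsSource]⟩
  | succ c ih =>
    rcases M.eq_empty_or_nonempty with rfl | hne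
    · exact ⟨∅, by simp, by simp, by simp [undominated], v₀, by simp [IsSource]⟩
    obtain ⟨v, hv, hdeg⟩ := hE.exists_two_mul_card_filter_adj_le hne
    obtain ⟨A, hAM, hAc, hcov, s, hs, hsource⟩ :=
      ih (M := {x ∈ M | E x v}) fun x hx => (mem_filter.1 hx).2
    have hsub : insert v A ⊆ M := insert_subset hv (hAM.trans (filter_subset _ _))
    refine ⟨insert v A, hsub, (card_insert_le _ _).trans (by omega), ?_, s,
      mem_insert_of_mem hs, ?_⟩
    · calc 2 ^ (c + 1) * #(undominated E (insert v A) (M \ insert v A))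
          ≤ 2 ^ (c + 1) * #(undominated E A ({x ∈ M | E x v} \ A)) := by
            gcongr
            exact undominated_insert_sdiff_insert_subset hE A M v
        _ = 2 * (2 ^ c * #(undominated E A ({x ∈ M | E x v} \ A))) := by ring
        _ ≤ 2 * #{x ∈ M | E x v} := by gcongr
        _ ≤ #M := hdeg
    · intro w hw hws
      rcases mem_insert.1 hw with rfl | hw
      · exact hM s (hsub hs)
      · exact hsource w hw hws

theorem IsTournament.exists_isSource_undominated_le (hE : IsTournament E) (c : ℕ) {R : Finset V}
    (hR : R.Nonempty) :
    ∃ A ⊆ R, #A ≤ c + 1 ∧ (∃ s, IsSource E A s) ∧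
      ∀ u ∈ R, 2 ^ c * #(undominated E A (R \ A)) ≤ #{x ∈ R | E x u} := by
  obtain ⟨v, hv, hmin⟩ := R.exists_min_image (fun u => #{x ∈ R | E x u}) hR
  obtain ⟨A, hAM, hAc, hcov, hs⟩ :=
    hE.exists_isSource_insert c (M := {x ∈ R | E x v}) fun x hx => (mem_filter.1 hx).2
  refine ⟨insert v A, insert_subset hv (hAM.trans (filter_subset _ _)),
    (card_insert_le _ _).trans (by omega), hs, fun u hu => ?_⟩
  calc 2 ^ c * #(undominated E (insert v A) (R \ insert v A))
      ≤ 2 ^ c * #(undominated E A ({x ∈ R | E x v} \ A)) := by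
        gcongr
        exact undominated_insert_sdiff_insert_subset hE A R v
    _ ≤ #{x ∈ R | E x v} := hcov
    _ ≤ #{x ∈ R | E x u} := hmin u hu

end Dominating

/-- The greedy algorithm: `Q` says how a chosen set must relate to the vertices left over, and
it survives when further vertices are used up. -/
theorem exists_pairwise_disjoint_family {V κ : Type*} [Fintype V] [DecidableEq V] [Fintype κ]
    {m : ℕ} {Q : κ → Finset V → Finset V → Prop} (hm : m * Fintype.card κ < Fintype.card V)
    (hanti : ∀ j A, Antitone fun O => Q j O A)
    (hex : ∀ j (R : Finset V), R.Nonempty → ∃ A ⊆ R, #A ≤ m ∧ Q j (R \ A) A) :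
    ∃ F : κ → Finset V, Pairwise (fun i j => Disjoint (F i) (F j)) ∧ (∀ j, #(F j) ≤ m) ∧
      ∀ j, Q j (univ \ univ.biUnion F) (F j) := by
  classical
  suffices h : ∀ s : Finset κ, ∃ F : κ → Finset V, (s : Set κ).PairwiseDisjoint F ∧
      (∀ j ∈ s, #(F j) ≤ m) ∧ ∀ j ∈ s, Q j (univ \ s.biUnion F) (F j) by
    obtain ⟨F, hdisj, hcard, hQ⟩ := h univ
    exact ⟨F, fun i j => hdisj (mem_coe.2 (mem_univ i)) (mem_coe.2 (mem_univ j)),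
      fun j => hcard j (mem_univ j), fun j => hQ j (mem_univ j)⟩
  intro s
  induction s using Finset.induction_on with
  | empty => exact ⟨fun _ => ∅, by simp, by simp, by simp⟩
  | insert a s ha ih =>
    obtain ⟨F, hdisj, hcard, hQ⟩ := ih
    have hleft : (univ \ s.biUnion F).Nonempty := by
      rw [← compl_eq_univ_sdiff, ← card_pos, card_compl, Nat.sub_pos_iff_lt]
      calc #(s.biUnion F) ≤ #s * m := card_biUnion_le_card_mul _ _ _ hcard
        _ ≤ Fintype.card κ * m := by gcongr; exact card_le_univ s
        _ < Fintype.card V := by rwa [mul_comm]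
    obtain ⟨A, hAR, hAm, hQA⟩ := hex a _ hleft
    have hold : ∀ j ∈ s, Function.update F a A j = F j := fun j hj =>
      Function.update_of_ne (ne_of_mem_of_not_mem hj ha) A F
    have hA : ∀ j ∈ s, Disjoint A (F j) := fun j hj =>
      (disjoint_sdiff.mono_left (subset_biUnion_of_mem F hj)).symm.mono_left hAR
    have hunion : (insert a s).biUnion (Function.update F a A) = A ∪ s.biUnion F := by
      rw [biUnion_insert, Function.update_self, biUnion_congr rfl hold]
    refine ⟨Function.update F a A, ?_, ?_, ?_⟩
    · rw [coe_insert, Set.pairwiseDisjoint_insert_of_notMem (mem_coe.not.2 ha),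
        Function.update_self]
      refine ⟨fun i hi j hj hij => ?_, fun j hj => ?_⟩
      · simpa only [Function.onFun, hold i hi, hold j hj] using hdisj hi hj hij
      · rw [hold j hj]
        exact hA j hj
    · rw [forall_mem_insert, Function.update_self]
      exact ⟨hAm, fun j hj => (hold j hj).symm ▸ hcard j hj⟩
    · rw [hunion, forall_mem_insert, Function.update_self]
      refine ⟨?_, fun j hj => ?_⟩
      · rwa [union_comm, ← sup_eq_union, ← sdiff_sdiff]
      · rw [hold j hj]
        exact hanti j (F j) (sdiff_subset_sdiff Subset.rfl subset_union_right) (hQ j hj)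

theorem univ_image_comp_equiv {α β γ : Type*} [Fintype α] [Fintype β] [DecidableEq γ] (e : α ≃ β)
    (f : β → γ) : univ.image (f ∘ e) = univ.image f := by
  classical
  rw [← image_image, image_univ_equiv]

theorem univ_biUnion_comp_equiv {α β γ : Type*} [Fintype α] [Fintype β] [DecidableEq γ] (e : α ≃ β)
    (f : β → Finset γ) : univ.biUnion (f ∘ e) = univ.biUnion f := by
  classical
  rw [← image_univ_equiv e, image_biUnion]
  rfl

section AlmostDominating

variable {V ι : Type*} [Fintype V] {E : V → V → Prop} [DecidableRel E]

/-- `s` is a source of `A`, and the vertices of `O` which `A` fails to dominate make up at most a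
`2⁻ᶜ`-fraction of the in-degree of any vertex of `O`. -/
structure IsAlmostDominating (E : V → V → Prop) [DecidableRel E] (c : ℕ) (O A : Finset V) (s : V) :
    Prop where
  isSource : IsSource E A s
  card_undominated_le : ∀ u ∈ O, 2 ^ c * #(undominated E A O) ≤ #(inN E u)

theorem IsAlmostDominating.anti {c : ℕ} {O O' A : Finset V} {s : V}
    (h : IsAlmostDominating E c O A s) (hO : O' ⊆ O) : IsAlmostDominating E c O' A s where
  isSource := h.isSource
  card_undominated_le u hu := (Nat.mul_le_mul_left _ (card_le_card
    (undominated_subset_undominated hO))).trans (h.card_undominated_le u (hO hu))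

variable [DecidableEq V]

theorem IsTournament.exists_isAlmostDominating (hE : IsTournament E) (c : ℕ) {R : Finset V}
    (hR : R.Nonempty) : ∃ A ⊆ R, #A ≤ c + 1 ∧ ∃ s, IsAlmostDominating E c (R \ A) A s := by
  obtain ⟨A, hAR, hA, ⟨s, hs⟩, hdom⟩ := hE.exists_isSource_undominated_le c hR
  refine ⟨A, hAR, hA, s, hs, fun u hu => (hdom u (sdiff_subset hu)).trans ?_⟩
  exact card_le_card (filter_subset_filter _ (subset_univ R))

variable [Fintype ι]

/-- A family of disjoint small sets: the vertices outside all of them are almost dominated by each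
`F (.inr i)`, with source `tip (.inr i)`, and almost dominate each `F (.inl i)`, with sink
`tip (.inl i)`. -/
structure IsDominatingFamily (E : V → V → Prop) [DecidableRel E] (c : ℕ) (F : ι ⊕ ι → Finset V)
    (tip : ι ⊕ ι → V) : Prop where
  disjoint : Pairwise fun p q => Disjoint (F p) (F q)
  card_le : ∀ p, #(F p) ≤ c + 1
  isAlmostDominating_inl : ∀ i, IsAlmostDominating (Function.swap E) c (univ \ univ.biUnion F)
    (F (.inl i)) (tip (.inl i))
  isAlmostDominating_inr : ∀ i, IsAlmostDominating E c (univ \ univ.biUnion F)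
    (F (.inr i)) (tip (.inr i))

theorem IsTournament.exists_isDominatingFamily (hE : IsTournament E) (c : ℕ)
    (hcard : (c + 1) * (2 * Fintype.card ι) < Fintype.card V) :
    ∃ (F : ι ⊕ ι → Finset V) (tip : ι ⊕ ι → V), IsDominatingFamily E c F tip := by
  obtain ⟨F, hdisj, hF, hQ⟩ := exists_pairwise_disjoint_family (κ := ι ⊕ ι) (m := c + 1)
    (Q := Sum.elim (fun _ O A => ∃ s, IsAlmostDominating (Function.swap E) c O A s)
      fun _ O A => ∃ s, IsAlmostDominating E c O A s)
    (by rwa [Fintype.card_sum, ← two_mul])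
    (by rintro (_ | _) A O O' hO ⟨s, hs⟩ <;> exact ⟨s, hs.anti hO⟩)
    (by rintro (_ | _) R hR
        exacts [hE.swap.exists_isAlmostDominating c hR, hE.exists_isAlmostDominating c hR])
  choose a ha using fun i => hQ (.inl i)
  choose b hb using fun i => hQ (.inr i)
  exact ⟨F, Sum.elim a b, hdisj, hF, ha, hb⟩

namespace IsDominatingFamily

variable {c : ℕ} {F : ι ⊕ ι → Finset V} {tip : ι ⊕ ι → V}

theorem tip_mem (h : IsDominatingFamily E c F tip) : ∀ p, tip p ∈ F p
  | .inl i => (h.isAlmostDominating_inl i).isSource.1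
  | .inr i => (h.isAlmostDominating_inr i).isSource.1

theorem eq_of_mem_of_mem (h : IsDominatingFamily E c F tip) {p q : ι ⊕ ι} {v : V} (hp : v ∈ F p)
    (hq : v ∈ F q) : p = q :=
  by_contra fun hpq => disjoint_left.1 (h.disjoint hpq) hp hq

theorem tip_injective (h : IsDominatingFamily E c F tip) : Function.Injective tip :=
  fun p q hpq => h.eq_of_mem_of_mem (h.tip_mem p) (hpq ▸ h.tip_mem q)

theorem card_biUnion_le (h : IsDominatingFamily E c F tip) :
    #(univ.biUnion F) ≤ (2 * c + 2) * Fintype.card ι := by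
  calc #(univ.biUnion F) ≤ #(univ : Finset (ι ⊕ ι)) * (c + 1) :=
        card_biUnion_le_card_mul _ _ _ fun p _ => h.card_le p
    _ = (2 * c + 2) * Fintype.card ι := by
        rw [card_univ, Fintype.card_sum]
        ring

theorem reindex (h : IsDominatingFamily E c F tip) (σ τ : Equiv.Perm ι) :
    IsDominatingFamily E c (F ∘ Equiv.sumCongr σ τ) (tip ∘ Equiv.sumCongr σ τ) := by
  have hunion := univ_biUnion_comp_equiv (Equiv.sumCongr σ τ) F
  exact
    { disjoint := h.disjoint.comp_of_injective (Equiv.sumCongr σ τ).injective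
      card_le := fun p => h.card_le _
      isAlmostDominating_inl := fun i => hunion ▸ h.isAlmostDominating_inl (σ i)
      isAlmostDominating_inr := fun i => hunion ▸ h.isAlmostDominating_inr (τ i) }

end IsDominatingFamily

end AlmostDominating

/-! ### Linkages and Menger's theorem -/

section Linkage

variable {V ι : Type*} {E : V → V → Prop} {W A B : Finset V}

/-- `l` is a directed path inside `W` from a vertex of `A` to a vertex of `B`. -/
structure IsPathBetween (E : V → V → Prop) (W A B : Finset V) (l : List V) : Prop where
  isChain : l.IsChain E
  nodup : l.Nodup
  mem_of_mem : ∀ v ∈ l, v ∈ W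
  head_mem : ∃ a ∈ A, l.head? = some a
  last_mem : ∃ b ∈ B, l.getLast? = some b

/-- The lists `P i` are pairwise disjoint directed paths inside `W` from `A` to `B`. -/
structure IsLinkage (E : V → V → Prop) (W A B : Finset V) (P : ι → List V) : Prop where
  isPathBetween : ∀ i, IsPathBetween E W A B (P i)
  disjoint : Pairwise fun i j => (P i).Disjoint (P j)

theorem IsPathBetween.reverse {l : List V} (h : IsPathBetween E W A B l) :
    IsPathBetween (Function.swap E) W B A l.reverse where
  isChain := List.isChain_reverse.2 h.isChain
  nodup := List.nodup_reverse.2 h.nodup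
  mem_of_mem v hv := h.mem_of_mem v (List.mem_reverse.1 hv)
  head_mem := by simpa using h.last_mem
  last_mem := by simpa using h.head_mem

theorem IsLinkage.reverse {P : ι → List V} (h : IsLinkage E W A B P) :
    IsLinkage (Function.swap E) W B A fun i => (P i).reverse where
  isPathBetween i := (h.isPathBetween i).reverse
  disjoint i j hij := by simpa [List.Disjoint] using h.disjoint hij

theorem IsLinkage.eq_of_mem_of_mem {P : ι → List V} (h : IsLinkage E W A B P) {i j : ι} {v : V}
    (hi : v ∈ P i) (hj : v ∈ P j) : i = j :=
  by_contra fun hij => h.disjoint hij hi hj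

variable [DecidableEq V]

/-- A system of disjoint paths from `A` to `B`, possibly along with disjoint cycles, encoded by the
map sending every vertex of `W` outside `B` to its successor; an unused vertex is its own
successor. -/
structure IsSuccessorMap (E : V → V → Prop) (W A B : Finset V) (g : V → V) : Prop where
  injOn : Set.InjOn g (W \ B : Finset V)
  map_mem : ∀ v ∈ W \ B, g v ∈ W \ A
  eq_or_adj : ∀ v ∈ W \ B, g v = v ∨ E v (g v)

/-- Otherwise the vertices that are entered by or leave `Q` would separate `A` from `B`. -/
theorem card_le_card_filter_eq_or_adj [DecidableRel E] (hA : A ⊆ W) (hB : B ⊆ W) (hAB : #A = #B)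
    (hconn : ∀ Z : Finset V, #Z < #A → StronglyConnectedOn E ((W \ Z : Finset V) : Set V))
    {Q : Finset V} (hQ : Q ⊆ W \ B) : #Q ≤ #{w ∈ W \ A | ∃ v ∈ Q, v = w ∨ E v w} := by
  set T : Finset V := {w ∈ W \ A | ∃ v ∈ Q, v = w ∨ E v w} with hT
  by_contra! hlt
  let Z : Finset V := (T \ Q) ∪ (A \ Q)
  have hQT : Q \ A ⊆ T := fun v hv => by
    rw [mem_sdiff] at hv
    exact mem_filter.2 ⟨mem_sdiff.2 ⟨(mem_sdiff.1 (hQ hv.1)).1, hv.2⟩, v, hv.1, .inl rfl⟩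
  have hZ : #Z < #A := by
    have hunion : #Z ≤ #(T \ Q) + #(A \ Q) := card_union_le _ _
    have hinter : #(Q \ A) ≤ #(T ∩ Q) := card_le_card (subset_inter hQT sdiff_subset)
    have hTsplit := card_sdiff_add_card_inter T Q
    have hQsplit := card_sdiff_add_card_inter Q A
    have hAsplit := card_sdiff_add_card_inter A Q
    rw [inter_comm] at hAsplit
    omega
  obtain ⟨a, haA, haZ⟩ := exists_mem_notMem_of_card_lt_card hZ
  obtain ⟨b, hbB, hbZ⟩ := exists_mem_notMem_of_card_lt_card (hAB ▸ hZ)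
  have haQ : a ∈ Q := by
    by_contra haQ
    exact haZ (mem_union_right _ (mem_sdiff.2 ⟨haA, haQ⟩))
  have hclosed : ∀ v ∈ Q, ∀ w ∈ W \ Z, E v w → w ∈ Q := by
    intro v hv w hw hvw
    simp only [Z, hT, mem_sdiff, mem_union, mem_filter] at hw
    grind
  have hreach : ReachWithin E ((W \ Z : Finset V) : Set V) a b :=
    hconn Z hZ a (mem_coe.2 (mem_sdiff.2 ⟨hA haA, haZ⟩)) b (mem_coe.2 (mem_sdiff.2 ⟨hB hbB, hbZ⟩))
  have hbQ : b ∈ Q := by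
    clear hbZ hbB
    induction hreach with
    | refl => exact haQ
    | tail _ hvw hv => exact hclosed _ hv _ (mem_coe.1 hvw.2.1) hvw.2.2
  exact (mem_sdiff.1 (hQ hbQ)).2 hbB

theorem exists_isSuccessorMap (hA : A ⊆ W) (hB : B ⊆ W) (hAB : #A = #B)
    (hconn : ∀ Z : Finset V, #Z < #A → StronglyConnectedOn E ((W \ Z : Finset V) : Set V)) :
    ∃ g, IsSuccessorMap E W A B g := by
  classical
  let t : (W \ B : Finset V) → Finset V := fun v => {w ∈ W \ A | v = w ∨ E v w}
  have hHall : ∀ s, #s ≤ #(s.biUnion t) := by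
    intro s
    have ht : s.biUnion t =
        {w ∈ W \ A | ∃ v ∈ s.map (.subtype (· ∈ W \ B)), v = w ∨ E v w} := by
      ext w
      simp only [t, mem_biUnion, mem_filter, mem_map, Function.Embedding.subtype_apply]
      grind
    rw [ht, ← card_map (.subtype (· ∈ W \ B))]
    exact card_le_card_filter_eq_or_adj hA hB hAB hconn fun v hv => property_of_mem_map_subtype s hv
  obtain ⟨f, hf, hft⟩ := (all_card_le_biUnion_card_iff_exists_injective t).1 hHall
  have hg : ∀ v (hv : v ∈ W \ B), (if h : v ∈ W \ B then f ⟨v, h⟩ else v) = f ⟨v, hv⟩ :=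
    fun v hv => dif_pos hv
  refine ⟨fun v => if h : v ∈ W \ B then f ⟨v, h⟩ else v, fun v hv w hw hvw => ?_,
    fun v hv => ?_, fun v hv => ?_⟩
  · simp only [hg v hv, hg w hw] at hvw
    exact congrArg Subtype.val (hf hvw)
  · exact hg v hv ▸ (mem_filter.1 (hft ⟨v, hv⟩)).1
  · exact hg v hv ▸ (mem_filter.1 (hft ⟨v, hv⟩)).2.imp_left Eq.symm

namespace IsSuccessorMap

variable {g : V → V}

theorem iterate_mem (h : IsSuccessorMap E W A B g) (hA : A ⊆ W) {x : V} (hx : x ∈ A) {p : ℕ}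
    (hxB : ∀ r < p, g^[r] x ∉ B) : g^[p] x ∈ W := by
  induction p with
  | zero => exact hA hx
  | succ p ih =>
    have hp : g^[p] x ∈ W \ B :=
      mem_sdiff.2 ⟨ih fun r hr => hxB r (hr.trans p.lt_succ_self), hxB p p.lt_succ_self⟩
    rw [Function.iterate_succ_apply']
    exact (mem_sdiff.1 (h.map_mem _ hp)).1

theorem iterate_mem_sdiff (h : IsSuccessorMap E W A B g) (hA : A ⊆ W) {x : V} (hx : x ∈ A) {p : ℕ}
    (hxB : ∀ r ≤ p, g^[r] x ∉ B) : g^[p] x ∈ W \ B :=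
  mem_sdiff.2 ⟨h.iterate_mem hA hx fun r hr => hxB r hr.le, hxB p le_rfl⟩

theorem iterate_succ_notMem (h : IsSuccessorMap E W A B g) (hA : A ⊆ W) {x : V} (hx : x ∈ A)
    {p : ℕ} (hxB : ∀ r < p + 1, g^[r] x ∉ B) : g^[p + 1] x ∉ A := by
  rw [Function.iterate_succ_apply']
  exact (mem_sdiff.1 (h.map_mem _ (h.iterate_mem_sdiff hA hx fun r hr =>
    hxB r (Nat.lt_succ_of_le hr)))).2

theorem eq_and_eq_of_iterate_eq (h : IsSuccessorMap E W A B g) (hA : A ⊆ W) {x y : V}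
    (hx : x ∈ A) (hy : y ∈ A) {p q : ℕ} (hxB : ∀ r < p, g^[r] x ∉ B) (hyB : ∀ r < q, g^[r] y ∉ B)
    (hxy : g^[p] x = g^[q] y) : p = q ∧ x = y := by
  induction p generalizing q with
  | zero =>
    cases q with
    | zero => exact ⟨rfl, hxy⟩
    | succ q => exact absurd (hxy ▸ hx) (h.iterate_succ_notMem hA hy hyB)
  | succ p ih =>
    cases q with
    | zero => exact absurd (hxy ▸ hy) (h.iterate_succ_notMem hA hx hxB)
    | succ q =>
      have hxp := h.iterate_mem_sdiff hA hx fun r hr => hxB r (Nat.lt_succ_of_le hr)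
      have hyq := h.iterate_mem_sdiff hA hy fun r hr => hyB r (Nat.lt_succ_of_le hr)
      rw [Function.iterate_succ_apply', Function.iterate_succ_apply'] at hxy
      obtain ⟨rfl, rfl⟩ := ih (fun r hr => hxB r (hr.trans p.lt_succ_self))
        (fun r hr => hyB r (hr.trans q.lt_succ_self)) (h.injOn hxp hyq hxy)
      exact ⟨rfl, rfl⟩

theorem exists_first_iterate_mem (h : IsSuccessorMap E W A B g) (hA : A ⊆ W) {x : V}
    (hx : x ∈ A) : ∃ p, g^[p] x ∈ B ∧ ∀ r < p, g^[r] x ∉ B := by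
  have hhit : ∃ p, g^[p] x ∈ B := by
    by_contra! hB
    have hinj : Function.Injective fun p : ℕ =>
        (⟨g^[p] x, h.iterate_mem hA hx fun r _ => hB r⟩ : W) := fun p q hpq =>
      (h.eq_and_eq_of_iterate_eq hA hx hx (fun r _ => hB r) (fun r _ => hB r)
        (congrArg Subtype.val hpq)).1
    exact not_injective_infinite_finite _ hinj
  exact ⟨Nat.find hhit, Nat.find_spec hhit, fun r hr => Nat.find_min hhit hr⟩

theorem isPathBetween_iterate (h : IsSuccessorMap E W A B g) (hA : A ⊆ W) {x : V} (hx : x ∈ A)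
    {p : ℕ} (hp : g^[p] x ∈ B) (hxB : ∀ r < p, g^[r] x ∉ B) :
    IsPathBetween E W A B (List.iterate g x (p + 1)) where
  isChain := by
    refine List.isChain_iff_getElem.2 fun r hr => ?_
    simp only [List.length_iterate, add_lt_add_iff_right] at hr
    simp only [List.getElem_iterate, Function.iterate_succ_apply']
    have hrB : g^[r] x ∈ W \ B := h.iterate_mem_sdiff hA hx fun s hs => hxB s (hs.trans_lt hr)
    refine (h.eq_or_adj _ hrB).resolve_left fun hfix => ?_
    rw [← Function.iterate_succ_apply' g] at hfix
    exact r.succ_ne_self (h.eq_and_eq_of_iterate_eq hA hx hx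
      (fun s hs => hxB s (by omega)) (fun s hs => hxB s (by omega)) hfix).1
  nodup := by
    rw [← List.range_map_iterate]
    refine List.Nodup.map_on (fun r hr s hs hrs => ?_) List.nodup_range
    rw [List.mem_range] at hr hs
    exact (h.eq_and_eq_of_iterate_eq hA hx hx
      (fun m hm => hxB m (by omega)) (fun m hm => hxB m (by omega)) hrs).1
  mem_of_mem v hv := by
    obtain ⟨r, hr, rfl⟩ := List.mem_iterate.1 hv
    exact h.iterate_mem hA hx fun s hs => hxB s (by omega)
  head_mem := ⟨x, hx, by simp [List.iterate]⟩
  last_mem := ⟨g^[p] x, hp, by rw [← List.range_map_iterate, List.range_succ]; simp⟩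

end IsSuccessorMap

/-- Menger's theorem, derived from Hall's theorem for successor maps. -/
theorem exists_isLinkage (hA : A ⊆ W) (hB : B ⊆ W) (hAB : #A = #B)
    (hconn : ∀ Z : Finset V, #Z < #A → StronglyConnectedOn E ((W \ Z : Finset V) : Set V))
    {a : ι → V} (ha : Function.Injective a) (haA : ∀ i, a i ∈ A) :
    ∃ P : ι → List V, IsLinkage E W A B P := by
  obtain ⟨g, hg⟩ := exists_isSuccessorMap hA hB hAB hconn
  choose p hp hbefore using fun i => hg.exists_first_iterate_mem hA (haA i)
  refine ⟨fun i => List.iterate g (a i) (p i + 1),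
    fun i => hg.isPathBetween_iterate hA (haA i) (hp i) (hbefore i), fun i j hij v hvi hvj => ?_⟩
  obtain ⟨r, hr, rfl⟩ := List.mem_iterate.1 hvi
  obtain ⟨s, hs, hrs⟩ := List.mem_iterate.1 hvj
  exact hij (ha (hg.eq_and_eq_of_iterate_eq hA (haA i) (haA j)
    (fun m hm => hbefore i m (by omega)) (fun m hm => hbefore j m (by omega)) hrs).2)

end Linkage

/-! ### Rerouting in linkages of minimum total length -/

theorem exists_eq_append_cons_of_notMem_rtake {α : Type*} {l : List α} {u s : α} {n : ℕ}
    (hu : u ∈ l) (hun : u ∉ l.rtake (n + 1)) (hs : l.getLast? = some s) :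
    ∃ m r, l = m ++ u :: r ∧ n < r.length ∧ s ∈ r := by
  obtain ⟨m, r, rfl⟩ := List.append_of_mem hu
  have hr : n < r.length := by
    by_contra! hr
    refine hun ?_
    rw [List.rtake_eq_reverse_take_reverse, List.mem_reverse, List.mem_take_iff_getElem]
    exact ⟨r.length, by simp; omega, by simp⟩
  refine ⟨m, r, rfl, hr, List.mem_of_getLast? ?_⟩
  rwa [List.getLast?_append_cons,
    List.getLast?_cons_of_ne_nil (List.ne_nil_of_length_pos (by omega))] at hs

section Reroute

variable {V ι : Type*} {E : V → V → Prop} {W A B : Finset V}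

namespace IsPathBetween

theorem mem_of_getLast? {l : List V} (h : IsPathBetween E W A B l) {s : V}
    (hs : l.getLast? = some s) : s ∈ B := by
  obtain ⟨b, hb, hlast⟩ := h.last_mem
  rwa [Option.some_injective _ (hs.symm.trans hlast)]

theorem singleton {x : V} (hW : x ∈ W) (hA : x ∈ A) (hB : x ∈ B) : IsPathBetween E W A B [x] where
  isChain := by simp
  nodup := by simp
  mem_of_mem := by simpa using hW
  head_mem := ⟨x, hA, rfl⟩
  last_mem := ⟨x, hB, rfl⟩

theorem dropUntil {m r : List V} {u : V} (h : IsPathBetween E W A B (m ++ u :: r)) :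
    IsPathBetween E W {u} B (u :: r) where
  isChain := (List.isChain_append.1 h.isChain).2.1
  nodup := (List.nodup_append.1 h.nodup).2.1
  mem_of_mem v hv := h.mem_of_mem v (List.mem_append_right _ hv)
  head_mem := ⟨u, mem_singleton_self u, rfl⟩
  last_mem := by simpa only [List.getLast?_append_cons] using h.last_mem

theorem takeUntil {m r : List V} {u : V} (h : IsPathBetween E W A B (m ++ u :: r)) :
    IsPathBetween E W A {u} (m ++ [u]) := by
  have hdrop : IsPathBetween (Function.swap E) W {u} A (u :: m.reverse) :=
    dropUntil (m := r.reverse) (A := B) (by simpa using h.reverse)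
  simpa using hdrop.reverse

theorem append {l l' : List V} {u y : V} (h : IsPathBetween E W A {u} l)
    (h' : IsPathBetween E W {y} B l') (huy : E u y) (hdisj : l.Disjoint l') :
    IsPathBetween E W A B (l ++ l') where
  isChain := by
    obtain ⟨u', hu', hlast⟩ := h.last_mem
    obtain ⟨y', hy', hhead⟩ := h'.head_mem
    obtain rfl := mem_singleton.1 hu'
    obtain rfl := mem_singleton.1 hy'
    refine h.isChain.append h'.isChain ?_
    simp [hlast, hhead, huy]
  nodup := h.nodup.append h'.nodup hdisj
  mem_of_mem v hv := (List.mem_append.1 hv).elim (h.mem_of_mem v) (h'.mem_of_mem v)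
  head_mem := by
    obtain ⟨a, ha, hhead⟩ := h.head_mem
    exact ⟨a, ha, by simp [hhead]⟩
  last_mem := by
    obtain ⟨b, hb, hlast⟩ := h'.last_mem
    exact ⟨b, hb, by simp [hlast]⟩

end IsPathBetween

variable [Fintype ι]

/-- A linkage of minimum total length among those with the same index type. -/
structure IsMinLinkage (E : V → V → Prop) (W A B : Finset V) (P : ι → List V) : Prop
    extends IsLinkage E W A B P where
  sum_length_le : ∀ P' : ι → List V, IsLinkage E W A B P' →
    ∑ i, (P i).length ≤ ∑ i, (P' i).length

theorem IsLinkage.exists_isMinLinkage {P₀ : ι → List V} (h : IsLinkage E W A B P₀) :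
    ∃ P : ι → List V, IsMinLinkage E W A B P := by
  obtain ⟨P, hP, hmin⟩ := exists_minimalFor_of_wellFoundedLT (IsLinkage E W A B)
    (fun P : ι → List V => ∑ i, (P i).length) ⟨P₀, h⟩
  exact ⟨P, hP, fun P' hP' => (le_total _ _).elim id fun h' => hmin hP' h'⟩

namespace IsMinLinkage

variable {P : ι → List V} {i j : ι} {s u x : V}

theorem reverse (h : IsMinLinkage E W A B P) :
    IsMinLinkage (Function.swap E) W B A fun i => (P i).reverse where
  toIsLinkage := h.toIsLinkage.reverse
  sum_length_le P' hP' := by simpa using h.sum_length_le _ hP'.reverse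

theorem sum_length_le_of_replace (h : IsMinLinkage E W A B P) (t : Finset ι) {Q : ι → List V}
    (hQ : ∀ i ∈ t, IsPathBetween E W A B (Q i))
    (hQQ : ∀ i ∈ t, ∀ j ∈ t, i ≠ j → (Q i).Disjoint (Q j))
    (hQP : ∀ i ∈ t, ∀ j ∉ t, (Q i).Disjoint (P j)) :
    ∑ i ∈ t, (P i).length ≤ ∑ i ∈ t, (Q i).length := by
  classical
  have hlink : IsLinkage E W A B (t.piecewise Q P) := by
    refine ⟨fun i => ?_, fun i j hij => ?_⟩
    · by_cases hi : i ∈ t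
      · simpa only [piecewise_eq_of_mem _ _ _ hi] using hQ i hi
      · simpa only [piecewise_eq_of_notMem _ _ _ hi] using h.isPathBetween i
    · by_cases hi : i ∈ t <;> by_cases hj : j ∈ t <;>
        simp only [hi, hj, piecewise_eq_of_mem, piecewise_eq_of_notMem, not_false_eq_true]
      exacts [hQQ i hi j hj hij, hQP i hi j hj, (hQP j hj i hi).symm, h.disjoint hij]
  have hsum := h.sum_length_le _ hlink
  have hin : ∑ i ∈ t, (t.piecewise Q P i).length = ∑ i ∈ t, (Q i).length :=
    sum_congr rfl fun i hi => by rw [piecewise_eq_of_mem _ _ _ hi]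
  have hout : ∑ i ∈ tᶜ, (t.piecewise Q P i).length = ∑ i ∈ tᶜ, (P i).length :=
    sum_congr rfl fun i hi => by rw [piecewise_eq_of_notMem _ _ _ (mem_compl.1 hi)]
  rwa [← sum_add_sum_compl t, ← sum_add_sum_compl t fun i => (t.piecewise Q P i).length, hin, hout,
    add_le_add_iff_right] at hsum

theorem length_le (h : IsMinLinkage E W A B P) {l : List V} (hl : IsPathBetween E W A B l)
    (hdisj : ∀ j ≠ i, l.Disjoint (P j)) : (P i).length ≤ l.length := by
  simpa using h.sum_length_le_of_replace {i} (Q := fun _ => l) (by simpa using hl)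
    (by simp +contextual) (by simpa using hdisj)

theorem mem_rtake_of_adj (h : IsMinLinkage E W A B P) (hs : (P i).getLast? = some s) (hx : x ∈ P i)
    (hxs : E x s) : x ∈ (P i).rtake 3 := by
  by_contra hx3
  obtain ⟨m, r, hP, hr, hsr⟩ := exists_eq_append_cons_of_notMem_rtake hx hx3 hs
  have hpath := hP ▸ h.isPathBetween i
  have hsW := hpath.mem_of_mem s (by simp [hsr])
  have hshort : IsPathBetween E W A B ((m ++ [x]) ++ [s]) := by
    refine hpath.takeUntil.append (.singleton hsW (mem_singleton_self s)
      ((h.isPathBetween i).mem_of_getLast? hs)) hxs ?_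
    have hnodup := hpath.nodup
    grind [List.Disjoint]
  have hle := h.length_le (i := i) hshort fun j hj v hv => h.disjoint hj.symm (by grind)
  grind

theorem mem_rtake_of_adj_of_adj (h : IsMinLinkage E W A B P) (hs : (P i).getLast? = some s)
    (hu : u ∈ P i) (hxW : x ∈ W) (hx : ∀ j, x ∉ P j) (hux : E u x) (hxs : E x s) :
    u ∈ (P i).rtake 3 := by
  by_contra hu3
  obtain ⟨m, r, hP, hr, hsr⟩ := exists_eq_append_cons_of_notMem_rtake hu hu3 hs
  have hpath := hP ▸ h.isPathBetween i
  have hsW := hpath.mem_of_mem s (by simp [hsr])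
  have hsB := (h.isPathBetween i).mem_of_getLast? hs
  have hnodup := hpath.nodup
  have hxi := hx i
  have hxs' : IsPathBetween E W {x} B ([x] ++ [s]) :=
    (IsPathBetween.singleton hxW (mem_singleton_self x) (mem_singleton_self x)).append
      (.singleton hsW (mem_singleton_self s) hsB) hxs (by grind [List.Disjoint])
  have hshort : IsPathBetween E W A B ((m ++ [u]) ++ ([x] ++ [s])) :=
    hpath.takeUntil.append hxs' hux (by grind [List.Disjoint])
  have hle := h.length_le (i := i) hshort fun j hj v hv hvj => by
    have hdisj := h.disjoint hj.symm (a := v)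
    grind
  grind

theorem length_add_length_le (h : IsMinLinkage E W A B P) (hij : i ≠ j) {l l' : List V}
    (hl : IsPathBetween E W A B l) (hl' : IsPathBetween E W A B l') (hdisj : l.Disjoint l')
    (hsub : ∀ v ∈ l, v ∈ P i ∨ v ∈ P j) (hsub' : ∀ v ∈ l', v ∈ P i ∨ v ∈ P j) :
    (P i).length + (P j).length ≤ l.length + l'.length := by
  classical
  have hoff : ∀ k ∉ ({i, j} : Finset ι), ∀ v, v ∈ P i ∨ v ∈ P j → v ∉ P k := by
    intro k hk v hv hvk
    simp only [mem_insert, mem_singleton, not_or] at hk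
    exact hv.elim (fun hvi => h.disjoint hk.1 hvk hvi) fun hvj => h.disjoint hk.2 hvk hvj
  have hsum := h.sum_length_le_of_replace {i, j} (Q := fun k => if k = i then l else l')
    (by simp [hl, hl', hij.symm]) (by simp [hdisj, hdisj.symm, hij.symm]) (by
      intro k _ m hm v hv hvm
      split_ifs at hv
      exacts [hoff m hm v (hsub v hv) hvm, hoff m hm v (hsub' v hv) hvm])
  simpa only [sum_pair hij, if_pos, if_neg hij.symm] using hsum

/-- Otherwise exchanging the ends of `P i` and `P j` along the edges `u y` and `x s` would shorten
the linkage. -/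
theorem mem_rtake_of_cross (h : IsMinLinkage E W A B P) (hs : (P i).getLast? = some s)
    (hu : u ∈ P i) (hij : i ≠ j) {m' r' : List V} {y : V} (hj : P j = m' ++ x :: r') (hy : y ∈ r')
    (hxs : E x s) (huy : E u y) : u ∈ (P i).rtake 3 := by
  by_contra hu3
  obtain ⟨m, r, hi, hr, hsr⟩ := exists_eq_append_cons_of_notMem_rtake hu hu3 hs
  obtain ⟨m'', r'', rfl⟩ := List.append_of_mem hy
  have hpathi := hi ▸ h.isPathBetween i
  have hpathj := hj ▸ h.isPathBetween j
  have hpathj' : IsPathBetween E W A B ((m' ++ x :: m'') ++ y :: r'') := by simpa using hpathj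
  have hsW := hpathi.mem_of_mem s (by simp [hsr])
  have hsB := (h.isPathBetween i).mem_of_getLast? hs
  have hoff : ∀ v ∈ P i, v ∉ P j := fun v hvi hvj => h.disjoint hij hvi hvj
  have hbefore : s ∉ m ++ [u] := by
    have hnodup := List.nodup_append.1 hpathi.nodup
    grind
  have hsplit : (m' ++ [x]).Disjoint (y :: r'') := by
    have hnodup := hpathj'.nodup
    simp only [List.nodup_append', List.disjoint_append_left, List.disjoint_cons_left] at hnodup
    exact List.disjoint_append_left.2 ⟨hnodup.2.2.1, by simpa using hnodup.2.2.2.1⟩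
  rw [hi, hj] at hoff
  have hi' : IsPathBetween E W A B ((m ++ [u]) ++ y :: r'') :=
    hpathi.takeUntil.append hpathj'.dropUntil huy fun v hv hv' => hoff v (by grind) (by grind)
  have hj' : IsPathBetween E W A B ((m' ++ [x]) ++ [s]) :=
    hpathj.takeUntil.append (.singleton hsW (mem_singleton_self s) hsB) hxs fun v hv hv' =>
      hoff v (by grind) (by grind)
  have hexchange : ((m ++ [u]) ++ y :: r'').Disjoint ((m' ++ [x]) ++ [s]) := by
    refine List.disjoint_append_left.2 ⟨List.disjoint_append_right.2 ⟨?_, ?_⟩,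
      List.disjoint_append_right.2 ⟨hsplit.symm, ?_⟩⟩
    · exact fun v hv hv' => hoff v (by grind) (by grind)
    · exact List.disjoint_singleton.2 hbefore
    · exact List.disjoint_singleton.2 fun hsj => hoff s (by grind) (by grind)
  have hle := h.length_add_length_le hij hi' hj' hexchange (by grind) (by grind)
  simp only [hi, hj, List.length_append, List.length_cons, List.length_nil] at hle
  omega

end IsMinLinkage

open Classical in
/-- The possible detours to the end `s` of the path `l`: the vertices off `l` which have an edge
to `s` and can be entered from `l` before its last three vertices. -/
noncomputable def detours (E : V → V → Prop) (W : Finset V) (l : List V) (s : V) : Finset V :=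
  {x ∈ W | x ∉ l ∧ E x s ∧ ∃ u ∈ l, u ∉ l.rtake 3 ∧ E u x}

theorem mem_detours {l : List V} {s x : V} : x ∈ detours E W l s ↔
    x ∈ W ∧ x ∉ l ∧ E x s ∧ ∃ u ∈ l, u ∉ l.rtake 3 ∧ E u x := by
  simp only [detours, mem_filter]

/-- By minimality every detour lies on another path, and two of them on the same path would allow
to exchange the ends of that path and of `P i`. -/
theorem IsMinLinkage.card_detours_le {P : ι → List V} (h : IsMinLinkage E W A B P) {i : ι} {s : V}
    (hs : (P i).getLast? = some s) : #(detours E W (P i) s) ≤ Fintype.card ι := by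
  refine card_le_card_of_forall_subsingleton (t := univ) (fun x j => x ∈ P j) (fun x hx => ?_)
    fun j _ x hx y hy => ?_
  · obtain ⟨hxW, -, hxs, u, hu, hu3, hux⟩ := mem_detours.1 hx
    by_contra! hoff
    exact hu3 (h.mem_rtake_of_adj_of_adj hs hu hxW (fun j => hoff j (mem_univ j)) hux hxs)
  · obtain ⟨hx, hxj⟩ := hx
    obtain ⟨hy, hyj⟩ := hy
    obtain ⟨-, hxi, hxs, u, hu, hu3, hux⟩ := mem_detours.1 hx
    obtain ⟨-, -, hys, w, hw, hw3, hwy⟩ := mem_detours.1 hy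
    have hij : i ≠ j := by
      rintro rfl
      exact hxi hxj
    by_contra hxy
    obtain ⟨m, r, hj⟩ := List.append_of_mem hxj
    rcases List.mem_append.1 (hj ▸ hyj) with hym | hyr
    · obtain ⟨m', r', rfl⟩ := List.append_of_mem hym
      exact hu3 (h.mem_rtake_of_cross hs hu hij (m' := m') (r' := r' ++ x :: r) (by simpa using hj)
        (by simp) hys hux)
    · exact hw3 (h.mem_rtake_of_cross hs hw hij hj
        (List.mem_of_ne_of_mem (Ne.symm hxy) hyr) hxs hwy)

theorem IsMinLinkage.adj_of_notMem_detours {P : ι → List V} (h : IsMinLinkage E W A B P)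
    (hE : IsTournament E) {i : ι} {s x u : V} (hs : (P i).getLast? = some s) (hxW : x ∈ W)
    (hx : x ∉ detours E W (P i) s) (hx3 : x ∉ (P i).rtake 3) (hxs : E x s) (hu : u ∈ P i)
    (hu3 : u ∉ (P i).rtake 3) : E x u := by
  have hxi : x ∉ P i := fun hxi => hx3 (h.mem_rtake_of_adj hs hxi hxs)
  have hxu : u ≠ x := ne_of_mem_of_not_mem hu hxi
  refine hE.adj_of_not_adj hxu fun hux => hx (mem_detours.2 ?_)
  exact ⟨hxW, hxi, hxs, u, hu, hu3, hux⟩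

end Reroute

/-! ### Linked dominating families and their gadget systems -/

theorem StronglyKConnected.mono {V : Type*} [Fintype V] [DecidableEq V] {E : V → V → Prop}
    {k l : ℕ} (h : StronglyKConnected E l) (hkl : k ≤ l) : StronglyKConnected E k :=
  ⟨(Nat.succ_le_succ hkl).trans h.1, fun Z hZ => h.2 Z (hZ.trans hkl)⟩

theorem IsPathBetween.reachWithin {V : Type*} {E : V → V → Prop} {W A B : Finset V} {l : List V}
    (h : IsPathBetween E W A B l) {S : Set V} (hS : ∀ v ∈ l, v ∈ S) {a b : V}
    (ha : l.head? = some a) (hb : l.getLast? = some b) : ReachWithin E S a b := by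
  rw [← List.head_of_head?_eq_some ha, ← List.getLast_of_getLast?_eq_some hb]
  exact List.relationReflTransGen_of_exists_isChain l
    (h.isChain.imp_of_mem_imp fun u v hu hv huv => ⟨hS u hu, hS v hv, huv⟩) _

theorem IsLinkage.exists_perm_head?_eq {V ι : Type*} [DecidableEq V] [Fintype ι]
    {E : V → V → Prop} {W B : Finset V} {a : ι → V} {P : ι → List V}
    (h : IsLinkage E W (univ.image a) B P) :
    ∃ σ : Equiv.Perm ι, ∀ i, (P i).head? = some (a (σ i)) := by
  have hhead : ∀ i, ∃ j, (P i).head? = some (a j) := fun i => by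
    simpa using (h.isPathBetween i).head_mem
  choose σ hσ using hhead
  have hinj : Function.Injective σ := fun i j hij =>
    h.eq_of_mem_of_mem (List.mem_of_head? (hσ i)) (hij ▸ List.mem_of_head? (hσ j))
  exact ⟨Equiv.ofBijective σ (Finite.injective_iff_bijective.1 hinj), hσ⟩

theorem mul_card_filter_le {V ι : Type*} [Fintype ι] {O : Finset V} {p : V → ι → Prop}
    [∀ u i, Decidable (p u i)] {m r f d : ℕ} (hm : 0 < m) (hr : 0 < r)
    (hι : Fintype.card ι ≤ r * m) (hd : ∀ i, r * f * #{u ∈ O | p u i} ≤ d) :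
    f * #{u ∈ O | m ≤ #{i | p u i}} ≤ d := by
  have hcount : #{u ∈ O | m ≤ #{i | p u i}} * m ≤ ∑ i, #{u ∈ O | p u i} := by
    calc #{u ∈ O | m ≤ #{i | p u i}} * m ≤ ∑ u ∈ O with m ≤ #{i | p u i}, #{i | p u i} :=
          card_nsmul_le_sum _ _ _ fun u hu => (mem_filter.1 hu).2
      _ ≤ ∑ u ∈ O, #{i | p u i} := sum_le_sum_of_subset (filter_subset _ _)
      _ = ∑ i, #{u ∈ O | p u i} := sum_card_bipartiteAbove_eq_sum_card_bipartiteBelow p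
  refine Nat.le_of_mul_le_mul_left ?_ (Nat.mul_pos hr hm)
  calc r * m * (f * #{u ∈ O | m ≤ #{i | p u i}})
      = r * f * (#{u ∈ O | m ≤ #{i | p u i}} * m) := by ring
    _ ≤ r * f * ∑ i, #{u ∈ O | p u i} := by gcongr
    _ = ∑ i, r * f * #{u ∈ O | p u i} := mul_sum _ _ _
    _ ≤ ∑ _i : ι, d := sum_le_sum fun i _ => hd i
    _ = Fintype.card ι * d := by rw [sum_const, smul_eq_mul, card_univ]
    _ ≤ r * m * d := by gcongr

/-- The first three and the last three vertices of a path. -/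
def pathEnds {V : Type*} [DecidableEq V] (l : List V) : Finset V :=
  (l.take 3 ++ l.rtake 3).toFinset

theorem card_pathEnds_le {V : Type*} [DecidableEq V] (l : List V) : #(pathEnds l) ≤ 6 := by
  refine (List.toFinset_card_le _).trans ?_
  rw [List.length_append, List.rtake_eq_reverse_take_reverse, List.length_reverse]
  exact Nat.add_le_add (List.length_take_le _ _) (List.length_take_le _ _)

theorem pathEnds_subset {V : Type*} [DecidableEq V] (l : List V) : pathEnds l ⊆ l.toFinset := by
  intro v hv
  rw [pathEnds, List.mem_toFinset, List.mem_append] at hv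
  exact List.mem_toFinset.2 (hv.elim List.mem_of_mem_take List.mem_of_mem_drop)

section LinkedFamily

variable {V ι : Type*} [Fintype V] [DecidableEq V] [Fintype ι] {E : V → V → Prop} {c : ℕ}
  {F : ι ⊕ ι → Finset V} {tip : ι ⊕ ι → V} {P : ι → List V} {i : ι} {x u v : V}

/-- The vertices which a path linking the tips of the family `F` may use: it must avoid all other
vertices of the family. -/
def linkRegion (F : ι ⊕ ι → Finset V) (tip : ι ⊕ ι → V) : Finset V :=
  univ \ (univ.biUnion F \ univ.image tip)

theorem mem_linkRegion_of_notMem (hv : v ∉ univ.biUnion F) : v ∈ linkRegion F tip :=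
  mem_sdiff.2 ⟨mem_univ v, fun h => hv (mem_sdiff.1 h).1⟩

theorem image_comp_subset_linkRegion (f : ι → ι ⊕ ι) :
    univ.image (fun i => tip (f i)) ⊆ linkRegion F tip :=
  image_subset_iff.2 fun i _ => mem_sdiff.2
    ⟨mem_univ _, fun h => (mem_sdiff.1 h).2 (mem_image_of_mem tip (mem_univ (f i)))⟩

theorem exists_eq_tip_of_mem_linkRegion {p : ι ⊕ ι} (hv : v ∈ linkRegion F tip) (hp : v ∈ F p) :
    ∃ q, tip q = v := by
  by_contra! hne
  refine (mem_sdiff.1 hv).2 (mem_sdiff.2 ⟨subset_biUnion_of_mem F (mem_univ p) hp, ?_⟩)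
  simpa using hne

variable [DecidableRel E]

/-- A dominating family together with a minimum linkage by paths `P i` from the sink of `F (.inl i)`
to the source of `F (.inr i)`, avoiding all other vertices of the family. -/
structure IsLinkedFamily (E : V → V → Prop) [DecidableRel E] (c : ℕ) (F : ι ⊕ ι → Finset V)
    (tip : ι ⊕ ι → V) (P : ι → List V) : Prop extends IsDominatingFamily E c F tip where
  isMinLinkage : IsMinLinkage E (linkRegion F tip) (univ.image fun i => tip (.inl i))
    (univ.image fun i => tip (.inr i)) P
  head?_eq : ∀ i, (P i).head? = some (tip (.inl i))
  getLast?_eq : ∀ i, (P i).getLast? = some (tip (.inr i))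

theorem IsDominatingFamily.exists_isMinLinkage (h : IsDominatingFamily E c F tip)
    (hconn : StronglyKConnected E ((2 * c + 3) * Fintype.card ι)) :
    ∃ P : ι → List V, IsMinLinkage E (linkRegion F tip) (univ.image fun i => tip (.inl i))
      (univ.image fun i => tip (.inr i)) P := by
  have hinl : Function.Injective fun i => tip (.inl i) := h.tip_injective.comp Sum.inl_injective
  have hinr : Function.Injective fun i => tip (.inr i) := h.tip_injective.comp Sum.inr_injective
  obtain ⟨P₀, hP₀⟩ := exists_isLinkage (E := E) (image_comp_subset_linkRegion (F := F) Sum.inl)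
    (image_comp_subset_linkRegion Sum.inr)
    (by rw [card_image_of_injective _ hinl, card_image_of_injective _ hinr])
    (fun Z hZ => by
      rw [card_image_of_injective _ hinl, card_univ] at hZ
      rw [linkRegion, sdiff_sdiff_left]
      refine hconn.2 _ ?_
      calc #((univ.biUnion F \ univ.image tip) ∪ Z)
          ≤ #(univ.biUnion F \ univ.image tip) + #Z := card_union_le _ _
        _ ≤ (2 * c + 2) * Fintype.card ι + Fintype.card ι := by
          gcongr
          exact (card_le_card sdiff_subset).trans h.card_biUnion_le
        _ = (2 * c + 3) * Fintype.card ι := by ring)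
    hinl fun i => mem_image_of_mem _ (mem_univ i)
  exact hP₀.exists_isMinLinkage

/-- A linkage joins the tips in an arbitrary order, which is why the family gets reindexed. -/
theorem IsDominatingFamily.exists_isLinkedFamily (h : IsDominatingFamily E c F tip)
    (hconn : StronglyKConnected E ((2 * c + 3) * Fintype.card ι)) :
    ∃ (F' : ι ⊕ ι → Finset V) (tip' : ι ⊕ ι → V) (P : ι → List V),
      IsLinkedFamily E c F' tip' P := by
  obtain ⟨P, hP⟩ := h.exists_isMinLinkage hconn
  obtain ⟨σ, hσ⟩ := hP.exists_perm_head?_eq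
  obtain ⟨τ, hτ⟩ := hP.reverse.exists_perm_head?_eq
  have hregion : linkRegion (F ∘ Equiv.sumCongr σ τ) (tip ∘ Equiv.sumCongr σ τ) =
      linkRegion F tip := by
    rw [linkRegion, univ_biUnion_comp_equiv, univ_image_comp_equiv, linkRegion]
  have hinl := univ_image_comp_equiv σ fun i => tip (.inl i)
  have hinr := univ_image_comp_equiv τ fun i => tip (.inr i)
  refine ⟨_, _, P, h.reindex σ τ, ?_, hσ, fun i => by simpa using hτ i⟩
  rw [hregion]
  exact hinl.symm ▸ hinr.symm ▸ hP

namespace IsLinkedFamily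

theorem elim_eq_of_mem_of_mem (h : IsLinkedFamily E c F tip P) {p : ι ⊕ ι} (hi : v ∈ P i)
    (hp : v ∈ F p) : p.elim id id = i := by
  obtain ⟨q, rfl⟩ := exists_eq_tip_of_mem_linkRegion
    ((h.isMinLinkage.isPathBetween i).mem_of_mem v hi) hp
  obtain rfl := h.eq_of_mem_of_mem (h.tip_mem q) hp
  rcases q with j | j
  · exact h.isMinLinkage.eq_of_mem_of_mem (List.mem_of_head? (h.head?_eq j)) hi
  · exact h.isMinLinkage.eq_of_mem_of_mem (List.mem_of_getLast? (h.getLast?_eq j)) hi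

/-- The gadget system of a linked family. Outside `X α` there are no vertices of the family, no ends
of the path `P α`, and no detours of `P α` in either direction. -/
noncomputable def gadgetSystem (h : IsLinkedFamily E c F tip P) : GadgetSystem V ι where
  U i := F (.inl i) ∪ F (.inr i) ∪ (P i).toFinset
  S i := F (.inl i) ∪ F (.inr i) ∪ pathEnds (P i)
  Sp i := F (.inr i)
  Sm i := F (.inl i)
  X i := univ.biUnion F ∪ pathEnds (P i) ∪ (detours E (linkRegion F tip) (P i) (tip (.inr i)) ∪
    detours (Function.swap E) (linkRegion F tip) (P i).reverse (tip (.inl i)))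
  sp i := tip (.inr i)
  sm i := tip (.inl i)
  sp_mem _ := mem_union_left _ (mem_union_right _ (h.tip_mem _))
  sm_mem _ := mem_union_left _ (mem_union_left _ (h.tip_mem _))
  Sp_subset _ := subset_union_right.trans subset_union_left
  Sm_subset _ := subset_union_left.trans subset_union_left
  S_subset i := union_subset_union_right (pathEnds_subset (P i))

variable (h : IsLinkedFamily E c F tip P)
include h

theorem getLast?_reverse_eq (i : ι) : (P i).reverse.getLast? = some (tip (.inl i)) := by
  rw [List.getLast?_reverse, h.head?_eq]

theorem condG1 : CondG1 h.gadgetSystem := by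
  intro i j hij
  have hindex : ∀ {i v}, v ∈ h.gadgetSystem.U i → (∃ p, p.elim id id = i ∧ v ∈ F p) ∨ v ∈ P i := by
    intro i v hv
    rcases mem_union.1 hv with hv | hv
    · exact .inl ((mem_union.1 hv).elim (fun hv => ⟨.inl i, rfl, hv⟩) fun hv => ⟨.inr i, rfl, hv⟩)
    · exact .inr (List.mem_toFinset.1 hv)
  refine disjoint_left.2 fun v hvi hvj => hij ?_
  rcases hindex hvi with ⟨p, rfl, hp⟩ | hvi <;> rcases hindex hvj with ⟨q, rfl, hq⟩ | hvj
  · rw [h.eq_of_mem_of_mem hp hq]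
  · exact h.elim_eq_of_mem_of_mem hvj hp
  · exact (h.elim_eq_of_mem_of_mem hvi hq).symm
  · exact h.isMinLinkage.eq_of_mem_of_mem hvi hvj

theorem card_S_le (i : ι) : #(h.gadgetSystem.S i) ≤ 2 * c + 8 := by
  calc #(h.gadgetSystem.S i) ≤ #(F (.inl i)) + #(F (.inr i)) + #(pathEnds (P i)) :=
        (card_union_le _ _).trans (Nat.add_le_add_right (card_union_le _ _) _)
    _ ≤ (c + 1) + (c + 1) + 6 :=
        Nat.add_le_add (Nat.add_le_add (h.card_le _) (h.card_le _)) (card_pathEnds_le _)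
    _ = 2 * c + 8 := by ring

theorem card_X_le (i : ι) : #(h.gadgetSystem.X i) ≤ (2 * c + 4) * Fintype.card ι + 6 := by
  have hrev := h.isMinLinkage.reverse.card_detours_le (h.getLast?_reverse_eq i)
  calc #(h.gadgetSystem.X i) ≤ (#(univ.biUnion F) + #(pathEnds (P i))) + (_ + _) :=
        (card_union_le _ _).trans (Nat.add_le_add (card_union_le _ _) (card_union_le _ _))
    _ ≤ ((2 * c + 2) * Fintype.card ι + 6) + (Fintype.card ι + Fintype.card ι) :=
        Nat.add_le_add (Nat.add_le_add h.card_biUnion_le (card_pathEnds_le _))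
          (Nat.add_le_add (h.isMinLinkage.card_detours_le (h.getLast?_eq i)) hrev)
    _ = (2 * c + 4) * Fintype.card ι + 6 := by ring

theorem condG3 : CondG3 E h.gadgetSystem := by
  intro i u hu v hv
  have hSU : ∀ w ∈ h.gadgetSystem.S i, w ∈ (h.gadgetSystem.U i : Set V) := h.gadgetSystem.S_subset i
  have hpath : ReachWithin E (h.gadgetSystem.U i : Set V) (tip (.inl i)) (tip (.inr i)) :=
    (h.isMinLinkage.isPathBetween i).reachWithin
      (fun w hw => mem_coe.2 (mem_union_right _ (List.mem_toFinset.2 hw)))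
      (h.head?_eq i) (h.getLast?_eq i)
  have hstart : ReachWithin E (h.gadgetSystem.U i : Set V) u (tip (.inl i)) := by
    by_cases hut : u = tip (.inl i)
    · exact hut ▸ .refl
    · exact .single ⟨hSU _ (h.gadgetSystem.Sm_subset i hu), hSU _ (h.gadgetSystem.sm_mem i),
        (h.isAlmostDominating_inl i).isSource.2 u hu hut⟩
  have hend : ReachWithin E (h.gadgetSystem.U i : Set V) (tip (.inr i)) v := by
    by_cases hvt : v = tip (.inr i)
    · exact hvt ▸ .refl
    · exact .single ⟨hSU _ (h.gadgetSystem.sp_mem i), hSU _ (h.gadgetSystem.Sp_subset i hv),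
        (h.isAlmostDominating_inr i).isSource.2 v hv hvt⟩
  exact (hstart.trans hpath).trans hend

theorem condG4 (hE : IsTournament E) : CondG4 E h.gadgetSystem := by
  intro i x hx
  simp only [gadgetSystem, pathEnds, mem_union, List.mem_toFinset, List.mem_append, not_or] at hx
  obtain ⟨⟨hxF, hxtake, hxrtake⟩, hxdetour, hxdetour'⟩ := hx
  have hxW : x ∈ linkRegion F tip := mem_linkRegion_of_notMem hxF
  have hU : ∀ u ∈ h.gadgetSystem.U i \ h.gadgetSystem.S i,
      u ∈ P i ∧ u ∉ (P i).take 3 ∧ u ∉ (P i).rtake 3 := by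
    intro u hu
    simp only [gadgetSystem, pathEnds, mem_sdiff, mem_union, List.mem_toFinset,
      List.mem_append] at hu
    tauto
  have hrev : ∀ w, w ∉ (P i).take 3 → w ∉ (P i).reverse.rtake 3 := by
    simp [List.rtake_eq_reverse_take_reverse]
  refine ⟨fun hxs u hu => ?_, fun hsx u hu => ?_⟩
  · obtain ⟨hu, -, hu3⟩ := hU u hu
    exact h.isMinLinkage.adj_of_notMem_detours hE (h.getLast?_eq i) hxW hxdetour hxrtake hxs hu hu3
  · obtain ⟨hu, hu3, -⟩ := hU u hu
    exact h.isMinLinkage.reverse.adj_of_notMem_detours hE.swap (h.getLast?_reverse_eq i) hxW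
      hxdetour' (hrev x hxtake) hsx (List.mem_reverse.2 hu) (hrev u hu3)

theorem Vokay_subset : Vokay h.gadgetSystem ⊆ univ \ univ.biUnion F := by
  refine sdiff_subset_sdiff Subset.rfl (biUnion_subset.2 fun p _ => ?_)
  rcases p with i | i
  · exact (h.gadgetSystem.Sm_subset i).trans (subset_biUnion_of_mem _ (mem_univ i))
  · exact (h.gadgetSystem.Sp_subset i).trans (subset_biUnion_of_mem _ (mem_univ i))

theorem condG5 {k t r : ℕ} (hkt : 0 < k * t) (hr : 0 < r) (hι : Fintype.card ι ≤ r * (k * t))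
    (hc : r * 10 ^ 12 ≤ 2 ^ c) : CondG5 E h.gadgetSystem k t := by
  intro u hu
  -- The filters in `VbadP` and `VbadM` differ from `undominated` in their decidability instances.
  refine ⟨mul_card_filter_le hkt hr hι fun i =>
      (Nat.mul_le_mul hc (card_le_card fun x hx => ?_)).trans
        (((h.isAlmostDominating_inl i).anti h.Vokay_subset).card_undominated_le u hu),
    mul_card_filter_le hkt hr hι fun i =>
      (Nat.mul_le_mul hc (card_le_card fun x hx => ?_)).trans
        (((h.isAlmostDominating_inr i).anti h.Vokay_subset).card_undominated_le u hu)⟩ <;>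
  · simp only [undominated, mem_filter] at hx ⊢
    exact hx

end IsLinkedFamily

end LinkedFamily

theorem statement3_general {V : Type*} [Fintype V] [DecidableEq V] {E : V → V → Prop}
    [DecidableRel E] {k t : ℕ} (hE : IsTournament E) (hk : 0 < k) (ht : 0 < t)
    (hconn : StronglyKConnected E (10 ^ 63 * k * t)) :
    ∃ G : GadgetSystem V (Fin (sigma1 * k * t)), GadgetHyp E G k t := by
  have hkt : 0 < k * t := Nat.mul_pos hk ht
  have hι : Fintype.card (Fin (sigma1 * k * t)) = 10 ^ 60 * (k * t) := by
    rw [Fintype.card_fin, sigma1, mul_assoc]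
  have hV : 10 ^ 63 * (k * t) < Fintype.card V := by
    rw [← mul_assoc, ← card_univ]
    exact hconn.1
  -- The exponent 250 is chosen such that `10 ^ 60 * 10 ^ 12 ≤ 2 ^ 250`, as needed for (G5).
  obtain ⟨F₀, tip₀, h₀⟩ := hE.exists_isDominatingFamily (ι := Fin (sigma1 * k * t)) 250
    (by rw [hι]; omega)
  obtain ⟨F, tip, P, h⟩ := h₀.exists_isLinkedFamily
    (hconn.mono (by rw [hι, mul_assoc (10 ^ 63)]; omega))
  refine ⟨h.gadgetSystem, h.condG1, fun i => ⟨?_, ?_⟩, h.condG3, h.condG4 hE,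
    h.condG5 hkt (r := 10 ^ 60) (by norm_num) hι.le (by norm_num)⟩
  · exact (h.card_S_le i).trans (by norm_num [rho])
  · have hX := h.card_X_le i
    rw [hι] at hX
    have hbound : rho * sigma1 * k * t = 10 ^ 4 * (10 ^ 60 * (k * t)) := by
      simp only [rho, sigma1, mul_assoc]
    omega

/-- Proposition 4.2: construction of the gadgets, properties (G1)–(G5). -/
theorem statement3 :
    ∃ C : ℕ, ∀ (τ₁ k t : ℕ), C ≤ τ₁ → C * τ₁ ≤ k → 2 ≤ t →
      ∀ (V : Type) [Fintype V] [DecidableEq V] (E : V → V → Prop) [DecidableRel E],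
        IsTournament E → StronglyKConnected E (τ₁ * k * t) →
        ∃ G : GadgetSystem V (Fin (sigma1 * k * t)), GadgetHyp E G k t :=
  ⟨10 ^ 63, fun _ _ _ hτ hk ht _ _ _ _ _ hE hconn =>
    statement3_general hE (by omega) (by omega) (hconn.mono (by gcongr))⟩

end TournamentPartition
end

section
/- Let T, the constants, and a gadget system satisfying (G1)–(G9) be as in the context. Then there is a subset A₂ ⊆ A₁ of size σ₂kt such that for every α ∈ A₂ and every s ∈ S(α), the vertex s has at least τ₂kt out-neighbours and at least τ₂kt in-neighbours that are available for α with respect to A₂. -/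
open Finset

namespace TournamentPartition

/-!
This is the deletion method. Draw a set `A` of `2n` indices uniformly at random. For a fixed index
`α`, condition on `α ∈ A`: then `A ∖ {α}` is a uniform `(2n - 1)`-subset of the remaining indices,
and since the `U(β)` are disjoint, each vertex lies in some `U(β)` with `β ∈ A ∖ {α}` only with a
tiny probability `ε`. Every further condition in the definition of availability asks that a fixed
large set of vertices keeps half of its members, so by Markov's inequality each such step loses
only a constant factor, and a vertex of `S(α)` fails with probability at most `36 ε`. Summing over
`S(α)`, an index `α ∈ A` is bad with probability at most `1 / 2`. Hence some `A` has at most `n`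
bad indices; deleting them, together with surplus good ones, only enlarges the sets
`W(A ∖ {α})` and so preserves availability.
-/

lemma ManyIn.mono {α : Type*} {s t : Finset α} {m : ℝ} {P Q : α → Prop} (h : ManyIn s m P)
    (hst : s ⊆ t) (hPQ : ∀ x, P x → Q x) : ManyIn t m Q := by
  obtain ⟨s', hs', hm, hP⟩ := h
  exact ⟨s', hs'.trans hst, hm, fun x hx => hPQ x (hP x hx)⟩

lemma manyIn_iff_le_card_filter {α : Type*} {s : Finset α} {m : ℝ} {P : α → Prop}
    [DecidablePred P] : ManyIn s m P ↔ m ≤ (#{x ∈ s | P x} : ℝ) := by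
  refine ⟨fun ⟨s', hs', hm, hP⟩ => hm.trans ?_, fun h => ⟨_, filter_subset _ _, h, by simp⟩⟩
  exact_mod_cast card_le_card fun x hx => mem_filter.2 ⟨hs' hx, hP x hx⟩

section Mostly

open Classical in
/-- `P` fails for at most a proportion `ε` of the elements of `Ω`: the statement that `P` has
probability at least `1 - ε` under the uniform distribution on `Ω`, with denominators cleared so
that `Ω` may be empty. -/
def Mostly {ω : Type*} (Ω : Finset ω) (ε : ℝ) (P : ω → Prop) : Prop :=
  (#{x ∈ Ω | ¬ P x} : ℝ) ≤ ε * #Ω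

variable {ω : Type*} {Ω : Finset ω} {ε δ : ℝ} {P Q : ω → Prop}

lemma mostly_iff [DecidablePred P] : Mostly Ω ε P ↔ (#{x ∈ Ω | ¬ P x} : ℝ) ≤ ε * #Ω := by
  unfold Mostly
  convert Iff.rfl

lemma Mostly.mono (hP : Mostly Ω ε P) (hPQ : ∀ x ∈ Ω, P x → Q x) : Mostly Ω ε Q := by
  classical
  rw [mostly_iff] at hP ⊢
  have hsub : {x ∈ Ω | ¬ Q x} ⊆ {x ∈ Ω | ¬ P x} := fun x hx =>
    mem_filter.2 ((mem_filter.1 hx).imp_right fun hQ => mt (hPQ x (mem_filter.1 hx).1) hQ)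
  exact le_trans (mod_cast card_le_card hsub) hP

lemma Mostly.of_le (hP : Mostly Ω ε P) (hεδ : ε ≤ δ) : Mostly Ω δ P :=
  le_trans hP (by gcongr)

lemma mostly_of_forall (hε : 0 ≤ ε) (hP : ∀ x ∈ Ω, P x) : Mostly Ω ε P := by
  classical
  rw [mostly_iff, filter_false_of_mem fun x hx => not_not.2 (hP x hx), card_empty, Nat.cast_zero]
  positivity

lemma Mostly.and (hP : Mostly Ω ε P) (hQ : Mostly Ω δ Q) :
    Mostly Ω (ε + δ) fun x => P x ∧ Q x := by
  classical
  rw [mostly_iff] at *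
  have hunion : #{x ∈ Ω | ¬ (P x ∧ Q x)} ≤ #{x ∈ Ω | ¬ P x} + #{x ∈ Ω | ¬ Q x} := by
    simp only [not_and_or, filter_or]
    exact card_union_le _ _
  calc (#{x ∈ Ω | ¬ (P x ∧ Q x)} : ℝ) ≤ #{x ∈ Ω | ¬ P x} + #{x ∈ Ω | ¬ Q x} := mod_cast hunion
    _ ≤ (ε + δ) * #Ω := by linarith

lemma mostly_forall_mem {α : Type*} (s : Finset α) {R : α → ω → Prop}
    (h : ∀ a ∈ s, Mostly Ω ε (R a)) : Mostly Ω (#s * ε) fun x => ∀ a ∈ s, R a x := by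
  classical
  induction s using Finset.induction_on with
  | empty => exact mostly_of_forall (by simp) (by simp)
  | insert a s ha ih =>
    have hand := (h a (mem_insert_self a s)).and (ih fun b hb => h b (mem_insert_of_mem hb))
    refine (hand.mono fun x _ hx => (forall_mem_insert ..).2 hx).of_le (le_of_eq ?_)
    rw [card_insert_of_notMem ha]
    push_cast
    ring

/-- Markov's inequality for the number of elements of `s` that fail `Q x`. -/
lemma mostly_manyIn {α : Type*} {s t : Finset α} {m : ℝ} {Q : ω → α → Prop} (hst : s ⊆ t)
    (hm : 2 * m ≤ #s) (hε : 0 ≤ ε) (h : ∀ u ∈ s, Mostly Ω ε (Q · u)) :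
    Mostly Ω (2 * ε) fun x => ManyIn t m (Q x) := by
  classical
  suffices Mostly Ω (2 * ε) fun x => ManyIn s m (Q x) from
    this.mono fun x _ hx => hx.mono hst fun _ => id
  rw [mostly_iff]
  set B := {x ∈ Ω | ¬ ManyIn s m (Q x)}
  have hfail : ∀ x ∈ B, (#s : ℝ) < 2 * #{u ∈ s | ¬ Q x u} := by
    intro x hx
    have hfew := (mem_filter.1 hx).2
    rw [manyIn_iff_le_card_filter, not_le] at hfew
    have : (#{u ∈ s | Q x u} : ℝ) + #{u ∈ s | ¬ Q x u} = #s :=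
      mod_cast card_filter_add_card_filter_not (Q x)
    linarith
  have hcount : #s * (#B : ℝ) ≤ #s * (2 * ε * #Ω) :=
    calc #s * (#B : ℝ) = ∑ _ ∈ B, (#s : ℝ) := by rw [sum_const, nsmul_eq_mul, mul_comm]
      _ ≤ ∑ x ∈ B, 2 * (#{u ∈ s | ¬ Q x u} : ℝ) :=
        sum_le_sum fun x hx => (hfail x hx).le
      _ ≤ ∑ x ∈ Ω, 2 * (#{u ∈ s | ¬ Q x u} : ℝ) :=
        sum_le_sum_of_subset_of_nonneg (filter_subset _ _) fun _ _ _ => by positivity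
      _ = 2 * ∑ u ∈ s, (#{x ∈ Ω | ¬ Q x u} : ℝ) := by
        rw [← mul_sum]
        congr 1
        exact_mod_cast sum_card_bipartiteAbove_eq_sum_card_bipartiteBelow fun x u => ¬ Q x u
      _ ≤ 2 * ∑ _ ∈ s, ε * #Ω := by
        gcongr with u hu
        exact mostly_iff.1 (h u hu)
      _ = #s * (2 * ε * #Ω) := by
        rw [sum_const, nsmul_eq_mul]
        ring
  obtain rfl | hs := s.eq_empty_or_nonempty
  · have hB : B = ∅ := eq_empty_of_forall_notMem fun x hx => by simpa using hfail x hx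
    rw [hB, card_empty, Nat.cast_zero]
    positivity
  · exact le_of_mul_le_mul_left hcount (by exact_mod_cast hs.card_pos)

end Mostly

section Subsets

lemma mul_choose_pred (m d : ℕ) : m * (m - 1).choose d = (d + 1) * m.choose (d + 1) := by
  obtain _ | m := m
  · simp
  · rw [Nat.add_sub_cancel, Nat.add_one_mul_choose_eq, mul_comm]

variable {I : Type*} {s : Finset I} {d n : ℕ} {ε : ℝ}

lemma card_filter_powersetCard_succ_erase [DecidableEq I] {α : I} (hα : α ∈ s)
    (P : Finset I → Prop) [DecidablePred P] :
    #{A ∈ powersetCard (d + 1) s | α ∈ A ∧ P (A.erase α)} =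
      #{B ∈ powersetCard d (s.erase α) | P B} := by
  refine card_nbij' (·.erase α) (insert α) ?_ ?_ ?_ ?_
  · intro A hA
    simp only [mem_coe, mem_filter, mem_powersetCard] at hA ⊢
    obtain ⟨⟨hAs, hcard⟩, hαA, hP⟩ := hA
    exact ⟨⟨erase_subset_erase α hAs, by rw [card_erase_of_mem hαA, hcard, Nat.add_sub_cancel]⟩, hP⟩
  · intro B hB
    simp only [mem_coe, mem_filter, mem_powersetCard] at hB ⊢
    obtain ⟨⟨hBs, hcard⟩, hP⟩ := hB
    have hαB : α ∉ B := fun h => notMem_erase α s (hBs h)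
    rw [card_insert_of_notMem hαB, hcard, erase_insert hαB, insert_subset_iff]
    exact ⟨⟨⟨hα, hBs.trans (erase_subset α s)⟩, rfl⟩, mem_insert_self α B, hP⟩
  · exact fun A hA => insert_erase (mem_filter.1 hA).2.1
  · exact fun B hB => erase_insert fun h =>
      notMem_erase α s ((mem_powersetCard.1 (mem_filter.1 hB).1).1 h)

lemma mostly_powersetCard_notMem (x : I) :
    Mostly (powersetCard d s) (d / #s) (x ∉ ·) := by
  classical
  by_cases hx : x ∈ s
  swap
  · exact mostly_of_forall (by positivity) fun A hA hxA => hx ((mem_powersetCard.1 hA).1 hxA)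
  obtain _ | d := d
  · exact mostly_of_forall (by positivity) (by simp)
  have hpos : (0 : ℝ) < #s := mod_cast card_pos.2 ⟨x, hx⟩
  have hcontain := card_filter_powersetCard_succ_erase (d := d) hx fun _ => True
  simp only [and_true, filter_true, card_powersetCard, card_erase_of_mem hx] at hcontain
  simp only [mostly_iff, not_not]
  rw [hcontain, card_powersetCard, div_mul_eq_mul_div, le_div_iff₀ hpos, mul_comm]
  exact_mod_cast (mul_choose_pred #s d).le

lemma sum_card_filter_erase [DecidableEq I] (P : I → Finset I → Prop)
    [∀ α, DecidablePred (P α)] :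
    ∑ A ∈ powersetCard (d + 1) s, #{α ∈ A | P α (A.erase α)} =
      ∑ α ∈ s, #{B ∈ powersetCard d (s.erase α) | P α B} :=
  calc ∑ A ∈ powersetCard (d + 1) s, #{α ∈ A | P α (A.erase α)}
      = ∑ A ∈ powersetCard (d + 1) s, #{α ∈ s | α ∈ A ∧ P α (A.erase α)} := by
        refine sum_congr rfl fun A hA => ?_
        rw [← filter_filter, filter_mem_eq_inter, inter_eq_right.2 (mem_powersetCard.1 hA).1]
    _ = ∑ α ∈ s, #{A ∈ powersetCard (d + 1) s | α ∈ A ∧ P α (A.erase α)} :=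
        by simp only [card_filter]; exact sum_comm
    _ = ∑ α ∈ s, #{B ∈ powersetCard d (s.erase α) | P α B} :=
        sum_congr rfl fun α hα => card_filter_powersetCard_succ_erase hα (P α)

lemma exists_powersetCard_card_filter_le [DecidableEq I] {P : I → Finset I → Prop}
    [∀ α, DecidablePred (P α)] (hd : d + 1 ≤ #s)
    (h : ∀ α ∈ s, Mostly (powersetCard d (s.erase α)) ε (P α)) :
    ∃ A ∈ powersetCard (d + 1) s, (#{α ∈ A | ¬ P α (A.erase α)} : ℝ) ≤ (d + 1) * ε := by
  refine exists_le_of_sum_le (powersetCard_nonempty.2 hd) ?_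
  calc ∑ A ∈ powersetCard (d + 1) s, (#{α ∈ A | ¬ P α (A.erase α)} : ℝ)
      = ∑ α ∈ s, (#{B ∈ powersetCard d (s.erase α) | ¬ P α B} : ℝ) :=
        mod_cast sum_card_filter_erase fun α B => ¬ P α B
    _ ≤ ∑ _ ∈ s, ε * ((#s - 1).choose d : ℕ) := by
        refine sum_le_sum fun α hα => (mostly_iff.1 (h α hα)).trans_eq ?_
        rw [card_powersetCard, card_erase_of_mem hα]
    _ = ε * (#s * (#s - 1).choose d : ℕ) := by
        rw [sum_const, nsmul_eq_mul, Nat.cast_mul, mul_left_comm]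
    _ = ∑ _ ∈ powersetCard (d + 1) s, (d + 1) * ε := by
        rw [mul_choose_pred, sum_const, nsmul_eq_mul, card_powersetCard]
        push_cast
        ring

lemma exists_card_eq_forall_erase [DecidableEq I] {P : I → Finset I → Prop}
    (hP : ∀ α, Antitone (P α)) (hn : 2 * n ≤ #s)
    (h : ∀ α ∈ s, Mostly (powersetCard (2 * n - 1) (s.erase α)) (1 / 2) (P α)) :
    ∃ A ⊆ s, #A = n ∧ ∀ α ∈ A, P α (A.erase α) := by
  classical
  obtain rfl | hpos := n.eq_zero_or_pos
  · exact ⟨∅, empty_subset s, rfl, by simp⟩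
  obtain ⟨A, hA, hbad⟩ := exists_powersetCard_card_filter_le (by lia) h
  obtain ⟨hAs, hAcard⟩ := mem_powersetCard.1 hA
  have hbad' : 2 * #{α ∈ A | ¬ P α (A.erase α)} ≤ #A := by
    have : (2 * #{α ∈ A | ¬ P α (A.erase α)} : ℝ) ≤ (2 * n - 1 : ℕ) + 1 := by linarith
    rw [hAcard]
    exact_mod_cast this
  have hgood : n ≤ #{α ∈ A | P α (A.erase α)} := by
    have := card_filter_add_card_filter_not (s := A) fun α => P α (A.erase α)
    lia
  obtain ⟨J, hJ, hJcard⟩ := exists_subset_card_eq hgood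
  have hJA : J ⊆ A := hJ.trans (filter_subset _ _)
  exact ⟨J, hJA.trans hAs, hJcard, fun α hα =>
    hP α (erase_subset_erase α hJA) (mem_filter.1 (hJ hα)).2⟩

end Subsets

section Availability

variable {V I : Type*} [Fintype V] [DecidableEq V] {E : V → V → Prop} [DecidableRel E]
  {G : GadgetSystem V I} {k t τ₁ τ₂ : ℕ} {W W' : Finset V} {u : V}

lemma Wof_anti : Antitone (Wof G) := fun _ _ h =>
  sdiff_subset_sdiff subset_rfl (biUnion_subset_biUnion_of_subset_left _ h)

lemma mostly_mem_Wof (hG : CondG1 G) (s : Finset I) (d : ℕ) (u : V) :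
    Mostly (powersetCard d s) (d / #s) (u ∈ Wof G ·) := by
  have hmem : ∀ B, u ∈ Wof G B ↔ ∀ β ∈ B, u ∉ G.U β := by simp [Wof]
  by_cases hu : ∃ β, u ∈ G.U β
  · obtain ⟨β, hβ⟩ := hu
    refine (mostly_powersetCard_notMem β).mono fun B _ hβB => (hmem B).2 fun γ hγ hγu => ?_
    exact disjoint_left.1 (hG β γ (ne_of_mem_of_not_mem hγ hβB).symm) hβ hγu
  · push Not at hu
    exact mostly_of_forall (by positivity) fun B _ => (hmem B).2 fun β _ => hu β

variable [Fintype I]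

lemma AvailA1.mono (h : W ⊆ W') (hu : AvailA1 E G k t W u) : AvailA1 E G k t W' u :=
  inter_subset_inter_left h hu

lemma AvailA2.mono (h : W ⊆ W') (hu : AvailA2 E G k t τ₂ W u) : AvailA2 E G k t τ₂ W' u :=
  ⟨inter_subset_inter_left h hu.1, hu.2.mono subset_rfl fun _ => AvailA1.mono h⟩

lemma Available.mono (h : W ⊆ W') (hu : Available E G k t τ₂ W u) :
    Available E G k t τ₂ W' u := by
  have h12 : ∀ v, AvailA1 E G k t W v ∨ AvailA2 E G k t τ₂ W v →
      AvailA1 E G k t W' v ∨ AvailA2 E G k t τ₂ W' v :=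
    fun _ => Or.imp (AvailA1.mono h) (AvailA2.mono h)
  exact hu.imp (AvailA1.mono h) <| Or.imp (AvailA2.mono h) <| Or.imp
    (fun h3 => ⟨inter_subset_inter_left h h3.1, h3.2.mono subset_rfl h12⟩)
    (fun h4 => ⟨inter_subset_inter_left h h4.1, h4.2.1.mono subset_rfl h12,
      h4.2.2.mono subset_rfl fun _ => AvailA1.mono h⟩)

lemma available_of_manyIn (hu : u ∈ Vokay G) (huW : u ∈ W)
    (hin : ManyIn (inN E u) ((τ₂ * k * t : ℕ) : ℝ) (AvailA1 E G k t W))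
    (hout : ManyIn (outN E u) ((τ₂ * k * t : ℕ) : ℝ) fun v =>
      AvailA1 E G k t W v ∨ AvailA2 E G k t τ₂ W v) :
    Available E G k t τ₂ W u := by
  by_cases hp : u ∈ VbadP E G k t <;> by_cases hm : u ∈ VbadM E G k t
  · exact .inr (.inr (.inr ⟨mem_inter.2 ⟨mem_inter.2 ⟨hp, hm⟩, huW⟩, hout, hin⟩))
  · exact .inr (.inr (.inl ⟨by simp [VgoodP, VgoodM, *], hout⟩))
  · exact .inr (.inl ⟨by simp [VgoodP, VgoodM, *], hin⟩)
  · exact .inl (by simp [AvailA1, Vgood, VgoodP, VgoodM, *])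

/-- The vertex `s` has at least `τ₂kt` out-neighbours and at least `τ₂kt` in-neighbours that are
available in `W`: the conclusion wanted for every `s ∈ S(α)`, with `W = W(A₂ ∖ {α})`. -/
def ManyAvailable (E : V → V → Prop) [DecidableRel E] (G : GadgetSystem V I) (k t τ₂ : ℕ)
    (W : Finset V) (s : V) : Prop :=
  ManyIn (outN E s) ((τ₂ * k * t : ℕ) : ℝ) (Available E G k t τ₂ W) ∧
    ManyIn (inN E s) ((τ₂ * k * t : ℕ) : ℝ) (Available E G k t τ₂ W)

lemma ManyAvailable.mono (h : W ⊆ W') (hu : ManyAvailable E G k t τ₂ W u) :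
    ManyAvailable E G k t τ₂ W' u :=
  hu.imp (ManyIn.mono · subset_rfl fun _ => Available.mono h)
    (ManyIn.mono · subset_rfl fun _ => Available.mono h)

/-- The parts of (G7)–(G9) that bound degrees below, with a common lower bound `d`. -/
structure LargeDegrees (E : V → V → Prop) [DecidableRel E] (G : GadgetSystem V I) (k t : ℕ)
    (d : ℝ) : Prop where
  out_goodP : ∀ u ∈ Vokay G, d ≤ #(outN E u ∩ VgoodP E G k t)
  in_good : ∀ u ∈ Vokay G, d ≤ #(inN E u ∩ Vgood E G k t)
  out_okay : ∀ u, d ≤ #(outN E u ∩ Vokay G)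
  in_okay : ∀ u, d ≤ #(inN E u ∩ Vokay G)

lemma GadgetHyp2.largeDegrees (hG : GadgetHyp2 E G k t τ₁) (hτ : 4 * τ₂ ≤ τ₁) :
    LargeDegrees E G k t (2 * (τ₂ * k * t : ℕ)) := by
  obtain ⟨-, h7, h8, h9⟩ := hG
  have hd : (2 * (τ₂ * k * t : ℕ) : ℝ) ≤ (τ₁ * k * t : ℕ) / 2 := by
    have : 4 * τ₂ * k * t ≤ τ₁ * k * t := by gcongr
    rify at this ⊢
    linarith
  have hmax {c x : ℝ} (h : max x ((τ₁ * k * t : ℕ) / 2) ≤ c) :=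
    hd.trans ((le_max_right _ _).trans h)
  exact ⟨fun u hu => hmax (h7 u hu), fun u hu => hmax (h8 u hu), fun u => hmax (h9 u).1,
    fun u => hmax (h9 u).2⟩

section RandomW

variable {ω : Type*} {Ω : Finset ω} {W : ω → Finset V} {ε : ℝ}

lemma LargeDegrees.mostly_manyIn_availA1 (hE : LargeDegrees E G k t (2 * (τ₂ * k * t : ℕ)))
    (hε : 0 ≤ ε) (hW : ∀ u, Mostly Ω ε (u ∈ W ·)) (hu : u ∈ Vokay G) :
    Mostly Ω (2 * ε) fun x =>
      ManyIn (inN E u) ((τ₂ * k * t : ℕ) : ℝ) (AvailA1 E G k t (W x)) :=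
  mostly_manyIn inter_subset_left (hE.in_good u hu) hε fun v hv =>
    (hW v).mono fun _ _ hvW => mem_inter.2 ⟨(mem_inter.1 hv).2, hvW⟩

lemma LargeDegrees.mostly_availA1_or_availA2
    (hE : LargeDegrees E G k t (2 * (τ₂ * k * t : ℕ))) (hε : 0 ≤ ε)
    (hW : ∀ u, Mostly Ω ε (u ∈ W ·)) (hu : u ∈ VgoodP E G k t) :
    Mostly Ω (3 * ε) fun x => AvailA1 E G k t (W x) u ∨ AvailA2 E G k t τ₂ (W x) u := by
  have hboth := (hW u).and (hE.mostly_manyIn_availA1 hε hW (sdiff_subset hu))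
  refine (hboth.mono fun x _ ⟨hux, hin⟩ => ?_).of_le (by linarith)
  by_cases hm : u ∈ VgoodM E G k t
  · exact .inl (mem_inter.2 ⟨mem_inter.2 ⟨hu, hm⟩, hux⟩)
  · exact .inr ⟨mem_inter.2 ⟨mem_sdiff.2 ⟨hu, hm⟩, hux⟩, hin⟩

lemma LargeDegrees.mostly_manyIn_availA1_or_availA2
    (hE : LargeDegrees E G k t (2 * (τ₂ * k * t : ℕ))) (hε : 0 ≤ ε)
    (hW : ∀ u, Mostly Ω ε (u ∈ W ·)) (hu : u ∈ Vokay G) :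
    Mostly Ω (6 * ε) fun x => ManyIn (outN E u) ((τ₂ * k * t : ℕ) : ℝ) fun v =>
      AvailA1 E G k t (W x) v ∨ AvailA2 E G k t τ₂ (W x) v :=
  (mostly_manyIn inter_subset_left (hE.out_goodP u hu) (by positivity) fun _ hv =>
    hE.mostly_availA1_or_availA2 hε hW (mem_inter.1 hv).2).of_le (by linarith)

lemma LargeDegrees.mostly_available (hE : LargeDegrees E G k t (2 * (τ₂ * k * t : ℕ)))
    (hε : 0 ≤ ε) (hW : ∀ u, Mostly Ω ε (u ∈ W ·)) (hu : u ∈ Vokay G) :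
    Mostly Ω (9 * ε) fun x => Available E G k t τ₂ (W x) u := by
  have hall := (hW u).and <| (hE.mostly_manyIn_availA1 hε hW hu).and
    (hE.mostly_manyIn_availA1_or_availA2 hε hW hu)
  exact (hall.mono fun x _ ⟨hux, hin, hout⟩ =>
    available_of_manyIn hu hux hin hout).of_le (by linarith)

lemma LargeDegrees.mostly_manyAvailable (hE : LargeDegrees E G k t (2 * (τ₂ * k * t : ℕ)))
    (hε : 0 ≤ ε) (hW : ∀ u, Mostly Ω ε (u ∈ W ·)) (s : V) :
    Mostly Ω (36 * ε) fun x => ManyAvailable E G k t τ₂ (W x) s := by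
  have hout := mostly_manyIn inter_subset_left (hE.out_okay s) (by positivity) fun v hv =>
    hE.mostly_available hε hW (mem_inter.1 hv).2
  have hin := mostly_manyIn inter_subset_left (hE.in_okay s) (by positivity) fun v hv =>
    hE.mostly_available hε hW (mem_inter.1 hv).2
  exact (hout.and hin).of_le (by linarith)

end RandomW

lemma LargeDegrees.mostly_powersetCard_forall_manyAvailable
    (hE : LargeDegrees E G k t (2 * (τ₂ * k * t : ℕ))) (hG : CondG1 G) {α : I} {s : Finset I}
    {d : ℕ} (hd : 72 * #(G.S α) * d ≤ #s) :
    Mostly (powersetCard d s) (1 / 2) fun B =>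
      ∀ v ∈ G.S α, ManyAvailable E G k t τ₂ (Wof G B) v := by
  refine (mostly_forall_mem (G.S α) fun v _ =>
    hE.mostly_manyAvailable (by positivity) (mostly_mem_Wof hG s d) v).of_le ?_
  calc (#(G.S α) * (36 * (d / #s)) : ℝ) = (72 * #(G.S α) * d : ℕ) / #s / 2 := by
        push_cast
        ring
    _ ≤ 1 / 2 := by
        gcongr
        exact div_le_one_of_le₀ (mod_cast hd) (by positivity)

end Availability

theorem statement6_general {V I : Type*} [Fintype V] [DecidableEq V] [Fintype I] [DecidableEq I]
    {E : V → V → Prop} [DecidableRel E] {G : GadgetSystem V I} {k t τ₂ r n : ℕ}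
    (hE : LargeDegrees E G k t (2 * (τ₂ * k * t : ℕ))) (hG : CondG1 G)
    (hS : ∀ α, #(G.S α) ≤ r) (hr : 0 < r) (hn : 144 * r * n ≤ Fintype.card I) :
    ∃ A : Finset I, #A = n ∧ ∀ α ∈ A, ∀ s ∈ G.S α,
      ManyIn (outN E s) ((τ₂ * k * t : ℕ) : ℝ) (Available E G k t τ₂ (Wof G (A.erase α))) ∧
      ManyIn (inN E s) ((τ₂ * k * t : ℕ) : ℝ) (Available E G k t τ₂ (Wof G (A.erase α))) := by
  have hd : 72 * r * (2 * n - 1) ≤ Fintype.card I - 1 := by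
    obtain _ | m := n
    · simp
    · have : 144 * r * (m + 1) = 72 * r * (2 * (m + 1) - 1) + 72 * r := by
        rw [show 2 * (m + 1) - 1 = 2 * m + 1 by lia]
        ring
      lia
  have hmostly : ∀ α ∈ univ, Mostly (powersetCard (2 * n - 1) (univ.erase α)) (1 / 2)
      fun B => ∀ s ∈ G.S α, ManyAvailable E G k t τ₂ (Wof G B) s := fun α hα =>
    hE.mostly_powersetCard_forall_manyAvailable hG <| by
      rw [card_erase_of_mem hα, card_univ]
      exact le_trans (by gcongr; exact hS α) hd
  have hanti : ∀ α, Antitone fun B => ∀ s ∈ G.S α, ManyAvailable E G k t τ₂ (Wof G B) s :=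
    fun α B B' hB h s hs => (h s hs).mono (Wof_anti hB)
  obtain ⟨A, -, hA⟩ := exists_card_eq_forall_erase hanti (by rw [card_univ]; nlinarith) hmostly
  exact ⟨A, hA⟩

lemma rho_mul_sigma2_le_sigma1 (k t : ℕ) : 144 * rho * (sigma2 * k * t) ≤ sigma1 * k * t :=
  calc 144 * rho * (sigma2 * k * t) = 144 * rho * sigma2 * k * t := by ring
    _ ≤ sigma1 * k * t := by
      gcongr
      norm_num [rho, sigma1, sigma2]

/-- Proposition 4.5: many available neighbours. -/
theorem statement6 :
    ∃ C : ℕ, ∀ (τ₁ τ₂ k t : ℕ), C ≤ τ₂ → C * τ₂ ≤ τ₁ → C * τ₁ ≤ k → 2 ≤ t →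
      ∀ (V : Type) [Fintype V] [DecidableEq V] (E : V → V → Prop) [DecidableRel E],
        IsTournament E → StronglyKConnected E (τ₁ * k * t) →
        ∀ G : GadgetSystem V (Fin (sigma1 * k * t)),
          GadgetHyp E G k t → GadgetHyp2 E G k t τ₁ →
          ∃ 𝒜₂ : Finset (Fin (sigma1 * k * t)),
            𝒜₂.card = sigma2 * k * t ∧
            ∀ α ∈ 𝒜₂, ∀ s ∈ G.S α,
              ManyIn (outN E s) ((τ₂ * k * t : ℕ) : ℝ)
                (Available E G k t τ₂ (Wof G (𝒜₂.erase α))) ∧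
              ManyIn (inN E s) ((τ₂ * k * t : ℕ) : ℝ)
                (Available E G k t τ₂ (Wof G (𝒜₂.erase α))) :=
  ⟨4, fun _ _ k t _ hτ _ _ _ _ _ _ _ _ _ _ hG hG' => statement6_general (hG'.largeDegrees hτ) hG.1
    (fun α => (hG.2.1 α).1) (by norm_num [rho]) (by simpa using rho_mul_sigma2_le_sigma1 k t)⟩

end TournamentPartition
end
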